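/- arXiv:1904.05051 — 2 statements merged into one kernel-verified Lean document; each statement's English description precedes it below -/
import Mathlib

section
/- Assume the abc-conjecture. Let F(U,V) ∈ ℤ[U,V] be a nonzero homogeneous polynomial of degree r without repeated irreducible factors (i.e., squarefree), and let q ≥ 2 be an integer. Then for every ε > 0 there exists a constant c > 0, depending only on F, q and ε, such that for all coprime integers u, v with F(u,v) ≠ 0, the product of the distinct primes p with p^q dividing F(u,v) is at most c · max(|u|,|v|)^{(2+ε)/(q−1)}. -/
/-!
Fix `F` of degree `r` and put `H = max (|u|, |v|)`. If `P` is the product of the primes whose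
`q`-th power divides `F (u, v)`, then `P ^ (q - 1) * rad (F (u, v)) ≤ |F (u, v)| ≪ H ^ r`
(`prod_pow_mul_radNat_le`, `abs_eval_form_le`). So it suffices to show that the abc-conjecture
gives `H ^ (r - 2 - ε) ≪ rad (F (u, v))` for every squarefree form `F` (`exists_radNat_form_ge`).

Dehomogenizing, this becomes a statement about a finite set of algebraic points on the projective
line, given by the zeros of a polynomial `f` over `ℚ` together with the point at infinity: for
`t = u / v`, the product of the primes modulo which `t` meets one of the points is
`≫ H(t) ^ (number of points - 2 - ε)` (`RadBound f`). The abc-conjecture is the case of the points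
`0, 1, ∞` (`ABCConjecture.radBound`).

The general case is reached by Belyi's argument. If `RadBound g` holds and `φ` is a polynomial map
all of whose critical values are zeros of `g`, then the bound holds for the full preimage of
`{g = 0} ∪ {∞}`, because `H(φ t) ≍ H(t) ^ deg φ` and the Riemann-Hurwitz count of points matches
exactly; moreover a bound for a point set implies the bound for its subsets
(`RadBound.transport`, `RadBound.of_dvd`). An arbitrary Galois-stable finite set is carried into
a set of rational points by repeatedly applying the minimal polynomials of its members
(`radBound_prod_irreducible`), and rational points are merged down to two finite ones by the maps
`(x - a) ^ m * (x - c) ^ n` (`radBound_prod_X_sub_C`). All maps involved are polynomials, so the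
point at infinity stays in the set throughout.
-/

/-- The radical of a natural number: the product of its distinct prime factors. -/
def radNat (m : ℕ) : ℕ := ∏ p ∈ m.primeFactors, p

/-- The abc-conjecture. -/
def ABCConjecture : Prop :=
  ∀ ε : ℝ, 0 < ε → ∃ K : ℝ, 0 < K ∧
    ∀ a b c : ℕ, 0 < a → 0 < b → 0 < c → Nat.Coprime a b → a + b = c →
      (c : ℝ) ≤ K * (radNat (a * b * c) : ℝ) ^ ((1 : ℝ) + ε)

section

open Polynomial

/-! ### Heights of rational numbers -/

/-- The multiplicative height of a rational number `u / v` in lowest terms: `max (|u|, v)`. -/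
def ratHeight (t : ℚ) : ℕ := max t.num.natAbs t.den

lemma one_le_ratHeight (t : ℚ) : 1 ≤ ratHeight t := le_max_of_le_right t.den_pos

lemma one_le_ratHeight_real (t : ℚ) : (1 : ℝ) ≤ ratHeight t := by
  exact_mod_cast one_le_ratHeight t

lemma exists_int_coeff (f : ℚ[X]) :
    ∃ (N : ℤ) (a : ℕ → ℤ), N ≠ 0 ∧ ∀ i, (a i : ℚ) = N * f.coeff i := by
  obtain ⟨N, hN, h⟩ := IsLocalization.integerNormalization_spec (nonZeroDivisors ℤ) f
  refine ⟨N, fun i => (IsLocalization.integerNormalization (nonZeroDivisors ℤ) f).coeff i,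
    nonZeroDivisors.ne_zero hN, fun i => ?_⟩
  have := congrArg (fun p => p.coeff i) h
  simpa using this

/-- Clearing the denominators in `f (u / v)`. -/
lemma int_form (f : ℚ[X]) (N : ℤ) (a : ℕ → ℤ) (ha : ∀ i, (a i : ℚ) = N * f.coeff i) (t : ℚ) :
    (N : ℚ) * (t.den : ℚ) ^ f.natDegree * f.eval t =
      ((∑ i ∈ Finset.range (f.natDegree + 1),
        a i * t.num ^ i * (t.den : ℤ) ^ (f.natDegree - i) : ℤ) : ℚ) := by
  rw [eval_eq_sum_range, Finset.mul_sum]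
  push_cast
  refine Finset.sum_congr rfl fun i hi => ?_
  have hi' : i ≤ f.natDegree := Nat.lt_succ_iff.mp (Finset.mem_range.mp hi)
  have hd : (t.den : ℚ) ≠ 0 := by exact_mod_cast t.den_ne_zero
  rw [ha]
  obtain ⟨k, hk⟩ := Nat.exists_eq_add_of_le hi'
  have h1 : (t.num : ℚ) = t * t.den := (Rat.mul_den_eq_num t).symm
  rw [h1, hk, Nat.add_sub_cancel_left, mul_pow, pow_add]
  ring

lemma exists_den_eval_dvd (f : ℚ[X]) :
    ∃ N : ℕ, N ≠ 0 ∧ ∀ t : ℚ, (f.eval t).den ∣ N * t.den ^ f.natDegree := by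
  obtain ⟨N, a, hN, ha⟩ := exists_int_coeff f
  refine ⟨N.natAbs, Int.natAbs_ne_zero.mpr hN, fun t => ?_⟩
  have h := int_form f N a ha t
  set Z := (∑ i ∈ Finset.range (f.natDegree + 1),
        a i * t.num ^ i * (t.den : ℤ) ^ (f.natDegree - i) : ℤ)
  have hd : (t.den : ℚ) ≠ 0 := by exact_mod_cast t.den_ne_zero
  have hN' : (N : ℚ) ≠ 0 := by exact_mod_cast hN
  have h2 : f.eval t = Rat.divInt Z (N * (t.den : ℤ) ^ f.natDegree) := by
    rw [Rat.divInt_eq_div]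
    push_cast
    rw [← h]
    field_simp
  have h3 := Rat.den_dvd Z (N * (t.den : ℤ) ^ f.natDegree)
  rw [← h2] at h3
  have h4 := Int.natAbs_dvd_natAbs.mpr h3
  simpa [Int.natAbs_mul, Int.natAbs_pow] using h4

lemma abs_num_eq (x : ℚ) : (x.num.natAbs : ℚ) = |x| * x.den := by
  have hd : (0 : ℚ) < x.den := by exact_mod_cast x.den_pos
  rw [Nat.cast_natAbs, Int.cast_abs, ← Rat.mul_den_eq_num x, abs_mul, abs_of_pos hd]

lemma abs_eval_le (f : ℚ[X]) : ∃ C : ℚ, 0 < C ∧ ∀ t : ℚ,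
    |f.eval t| * (t.den : ℚ) ^ f.natDegree ≤ C * (ratHeight t : ℚ) ^ f.natDegree := by
  refine ⟨∑ i ∈ Finset.range (f.natDegree + 1), |f.coeff i| + 1,
    by positivity, fun t => ?_⟩
  have hd : (0 : ℚ) < t.den := by exact_mod_cast t.den_pos
  have h1 : |f.eval t| * (t.den : ℚ) ^ f.natDegree ≤
      ∑ i ∈ Finset.range (f.natDegree + 1), |f.coeff i| * (ratHeight t : ℚ) ^ f.natDegree := by
    rw [eval_eq_sum_range]
    refine (mul_le_mul_of_nonneg_right (Finset.abs_sum_le_sum_abs _ _) (by positivity)).trans ?_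
    rw [Finset.sum_mul]
    refine Finset.sum_le_sum fun i hi => ?_
    have hi' : i ≤ f.natDegree := Nat.lt_succ_iff.mp (Finset.mem_range.mp hi)
    obtain ⟨k, hk⟩ := Nat.exists_eq_add_of_le hi'
    rw [abs_mul, abs_pow, mul_assoc]
    refine mul_le_mul_of_nonneg_left ?_ (abs_nonneg _)
    have e : |t| ^ i * (t.den : ℚ) ^ f.natDegree
        = (t.num.natAbs : ℚ) ^ i * (t.den : ℚ) ^ k := by
      rw [abs_num_eq, hk, mul_pow, pow_add]; ring
    rw [e, hk, pow_add]
    have a1 : (t.num.natAbs : ℚ) ≤ ratHeight t := by exact_mod_cast le_max_left _ _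
    have a2 : (t.den : ℚ) ≤ ratHeight t := by exact_mod_cast le_max_right _ _
    gcongr
  rw [← Finset.sum_mul] at h1
  refine h1.trans ?_
  gcongr
  linarith

lemma ratHeight_eval_le (f : ℚ[X]) : ∃ C : ℝ, 0 < C ∧ ∀ t : ℚ,
    (ratHeight (f.eval t) : ℝ) ≤ C * (ratHeight t : ℝ) ^ f.natDegree := by
  obtain ⟨N, hN, hden⟩ := exists_den_eval_dvd f
  obtain ⟨C, hC, habs⟩ := abs_eval_le f
  refine ⟨((N * (C + 1) : ℚ) : ℝ), by
    have : (0 : ℚ) < N := by exact_mod_cast Nat.pos_of_ne_zero hN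
    exact_mod_cast (by positivity : (0 : ℚ) < N * (C + 1)), fun t => ?_⟩
  have hle : (f.eval t).den ≤ N * t.den ^ f.natDegree :=
    Nat.le_of_dvd (Nat.mul_pos (Nat.pos_of_ne_zero hN) (pow_pos t.den_pos _)) (hden t)
  have hle' : ((f.eval t).den : ℚ) ≤ N * (t.den : ℚ) ^ f.natDegree := by exact_mod_cast hle
  have a2 : (t.den : ℚ) ≤ ratHeight t := by exact_mod_cast le_max_right _ _
  have hH : (0 : ℚ) ≤ (ratHeight t : ℚ) ^ f.natDegree := by positivity
  have key : (ratHeight (f.eval t) : ℚ) ≤ N * (C + 1) * (ratHeight t : ℚ) ^ f.natDegree := by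
    rw [ratHeight, Nat.cast_max]
    refine max_le ?_ ?_
    · rw [abs_num_eq]
      calc |f.eval t| * ((f.eval t).den : ℚ) ≤ |f.eval t| * (N * (t.den : ℚ) ^ f.natDegree) := by
            gcongr
        _ = N * (|f.eval t| * (t.den : ℚ) ^ f.natDegree) := by ring
        _ ≤ N * (C * (ratHeight t : ℚ) ^ f.natDegree) := by
            gcongr N * ?_
            exact habs t
        _ ≤ _ := by
            rw [mul_assoc]
            gcongr
            linarith
    · calc ((f.eval t).den : ℚ) ≤ N * (t.den : ℚ) ^ f.natDegree := hle'
        _ ≤ N * 1 * (ratHeight t : ℚ) ^ f.natDegree := by rw [mul_one]; gcongr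
        _ ≤ _ := by
            gcongr
            linarith
  exact_mod_cast key

/-- The leading term dominates a polynomial away from a bounded interval. -/
lemma exists_abs_eval_ge (f : ℚ[X]) (hf : f ≠ 0) : ∃ M : ℚ, 1 ≤ M ∧ ∀ t : ℚ, M ≤ |t| →
    |f.leadingCoeff| / 2 * |t| ^ f.natDegree ≤ |f.eval t| := by
  set S : ℚ := ∑ i ∈ Finset.range f.natDegree, |f.coeff i| with hS
  have hl : 0 < |f.leadingCoeff| := abs_pos.mpr (leadingCoeff_ne_zero.mpr hf)
  refine ⟨max 1 (2 * S / |f.leadingCoeff|), le_max_left _ _, fun t ht => ?_⟩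
  have h1 : 1 ≤ |t| := (le_max_left _ _).trans ht
  have h2 : 2 * S ≤ |t| * |f.leadingCoeff| := by
    rw [← div_le_iff₀ hl]; exact (le_max_right _ _).trans ht
  have h0 : (0 : ℚ) < |t| := by linarith
  have hsum : |∑ i ∈ Finset.range f.natDegree, f.coeff i * t ^ i| * |t| ≤
      S * |t| ^ f.natDegree := by
    rw [hS, Finset.sum_mul]
    refine (mul_le_mul_of_nonneg_right (Finset.abs_sum_le_sum_abs _ _) h0.le).trans ?_
    rw [Finset.sum_mul]
    refine Finset.sum_le_sum fun i hi => ?_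
    rw [abs_mul, abs_pow, mul_assoc, ← pow_succ]
    refine mul_le_mul_of_nonneg_left ?_ (abs_nonneg _)
    exact pow_le_pow_right₀ h1 (Finset.mem_range.mp hi)
  have hev : f.eval t = ∑ i ∈ Finset.range f.natDegree, f.coeff i * t ^ i +
      f.leadingCoeff * t ^ f.natDegree := by
    rw [eval_eq_sum_range, Finset.sum_range_succ]; rfl
  set T := ∑ i ∈ Finset.range f.natDegree, f.coeff i * t ^ i
  have h3 : |f.leadingCoeff| * |t| ^ f.natDegree - |T| ≤ |f.eval t| := by
    rw [hev, ← abs_pow, ← abs_mul]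
    have := abs_sub_abs_le_abs_sub (f.leadingCoeff * t ^ f.natDegree) (-T)
    rw [abs_neg, sub_neg_eq_add, add_comm] at this
    linarith
  have h4 : |T| ≤ |f.leadingCoeff| / 2 * |t| ^ f.natDegree := by
    refine le_of_mul_le_mul_right (hsum.trans ?_) h0
    have : 0 ≤ |t| ^ f.natDegree := by positivity
    nlinarith
  linarith

/-- A polynomial `f` of degree `d` raises heights to the power `d`, up to constants. Writing
`t = u / v` in lowest terms, the integer `Z = N * v ^ d * f t` is congruent modulo `v` to the
constant `a d` times the unit `u ^ d`, so only a bounded part of `v ^ d` can cancel. -/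
lemma ratHeight_eval_ge (f : ℚ[X]) (hf : f ≠ 0) : ∃ C : ℝ, 0 < C ∧ ∀ t : ℚ,
    (ratHeight t : ℝ) ^ f.natDegree ≤ C * ratHeight (f.eval t) := by
  obtain ⟨N, a, hN, ha⟩ := exists_int_coeff f
  obtain ⟨M, hM1, hM⟩ := exists_abs_eval_ge f hf
  have hl : 0 < |f.leadingCoeff| := abs_pos.mpr (leadingCoeff_ne_zero.mpr hf)
  set d := f.natDegree with hd
  have had : a d ≠ 0 := by
    have : (a d : ℚ) ≠ 0 := by
      rw [ha]
      exact mul_ne_zero (by exact_mod_cast hN) (leadingCoeff_ne_zero.mpr hf)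
    exact_mod_cast this
  set A : ℚ := |(a d : ℚ)| ^ d with hA
  have hApos : 0 < A := by
    have : (0 : ℚ) < |(a d : ℚ)| := abs_pos.mpr (by exact_mod_cast had)
    positivity
  have hden : ∀ t : ℚ, (t.den : ℚ) ^ d ≤ A * (f.eval t).den := by
    intro t
    have h := int_form f N a ha t
    rw [← hd] at h
    set Z := (∑ i ∈ Finset.range (d + 1), a i * t.num ^ i * (t.den : ℤ) ^ (d - i) : ℤ) with hZ
    have hZD : (t.den : ℤ) ^ d ∣ Z * (f.eval t).den := by
      refine ⟨N * (f.eval t).num, ?_⟩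
      have : ((Z * (f.eval t).den : ℤ) : ℚ) = ((t.den : ℤ) ^ d * (N * (f.eval t).num) : ℤ) := by
        push_cast
        rw [← h, ← Rat.mul_den_eq_num (f.eval t)]
        ring
      exact_mod_cast this
    have hZmod : (t.den : ℤ) ∣ Z - a d * t.num ^ d := by
      rw [hZ, Finset.sum_range_succ, Nat.sub_self, pow_zero, mul_one, add_sub_cancel_right]
      refine Finset.dvd_sum fun i hi => Dvd.dvd.mul_left ?_ _
      exact dvd_pow_self _ (Nat.sub_ne_zero_of_lt (Finset.mem_range.mp hi))
    have hcop : IsCoprime (t.num ^ d) (t.den : ℤ) := by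
      refine IsCoprime.pow_left ?_
      rw [Int.isCoprime_iff_gcd_eq_one]
      exact t.reduced
    obtain ⟨α, β, hαβ⟩ := hcop
    obtain ⟨w, hw⟩ := hZmod
    -- `a d = α Z + v γ` by Bezout
    have hγ : ∃ γ : ℤ, a d - t.den * γ = α * Z :=
      ⟨a d * β - α * w, by
        linear_combination (-a d) * hαβ - α * hw⟩
    obtain ⟨γ, hγ⟩ := hγ
    have hdiv : (t.den : ℤ) ^ d ∣ a d ^ d * (f.eval t).den := by
      have h1 : Z ∣ a d ^ d - (t.den * γ) ^ d :=
        (Dvd.intro_left α hγ.symm).trans (sub_dvd_pow_sub_pow _ _ _)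
      have h2 : (t.den : ℤ) ^ d ∣ (a d ^ d - (t.den * γ) ^ d) * (f.eval t).den :=
        hZD.trans (mul_dvd_mul_right h1 _)
      have h3 : (t.den : ℤ) ^ d ∣ (t.den * γ) ^ d * (f.eval t).den := by
        rw [mul_pow, mul_assoc]; exact dvd_mul_right _ _
      have := dvd_add h2 h3
      rwa [← add_mul, sub_add_cancel] at this
    have hpos : (a d ^ d * (f.eval t).den : ℤ) ≠ 0 :=
      mul_ne_zero (pow_ne_zero _ had) (by exact_mod_cast (f.eval t).den_ne_zero)
    have := Int.le_of_dvd (abs_pos.mpr hpos) ((dvd_abs _ _).mpr hdiv)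
    rw [abs_mul, abs_pow, Nat.abs_cast] at this
    rw [hA]
    exact_mod_cast this
  set B : ℚ := M ^ d * A + 2 / |f.leadingCoeff| * A with hB
  have hMd : (0 : ℚ) < M ^ d := by positivity
  have hBpos : 0 < B := by positivity
  refine ⟨(B : ℝ), by exact_mod_cast hBpos, fun t => ?_⟩
  have b1 : ((f.eval t).num.natAbs : ℚ) ≤ ratHeight (f.eval t) := by
    exact_mod_cast le_max_left _ _
  have b2 : ((f.eval t).den : ℚ) ≤ ratHeight (f.eval t) := by exact_mod_cast le_max_right _ _
  have hd0 : (0 : ℚ) < t.den := by exact_mod_cast t.den_pos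
  have b3 : (0 : ℚ) ≤ ratHeight (f.eval t) := by positivity
  have key : (ratHeight t : ℚ) ^ d ≤ B * ratHeight (f.eval t) := by
    rcases le_total |t| M with h | h
    · have h1 : (ratHeight t : ℚ) ≤ M * t.den := by
        rw [ratHeight, Nat.cast_max, abs_num_eq]
        exact max_le (by gcongr) (le_mul_of_one_le_left hd0.le hM1)
      calc (ratHeight t : ℚ) ^ d ≤ (M * t.den) ^ d := by gcongr
        _ = M ^ d * (t.den : ℚ) ^ d := mul_pow _ _ _
        _ ≤ M ^ d * (A * (f.eval t).den) := by gcongr; exact hden t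
        _ ≤ M ^ d * (A * ratHeight (f.eval t)) := by gcongr
        _ ≤ B * ratHeight (f.eval t) := by
            rw [← mul_assoc]
            gcongr
            rw [hB]
            have : 0 < 2 / |f.leadingCoeff| * A := by positivity
            linarith
    · have h1 : (ratHeight t : ℚ) ≤ |t| * t.den := by
        rw [ratHeight, Nat.cast_max, abs_num_eq]
        exact max_le le_rfl (le_mul_of_one_le_left hd0.le (hM1.trans h))
      have h2 : |t| ^ d ≤ 2 / |f.leadingCoeff| * |f.eval t| := by
        have := hM t h
        rw [div_mul_eq_mul_div, le_div_iff₀ hl]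
        linarith
      calc (ratHeight t : ℚ) ^ d ≤ (|t| * t.den) ^ d := by gcongr
        _ = |t| ^ d * (t.den : ℚ) ^ d := mul_pow _ _ _
        _ ≤ (2 / |f.leadingCoeff| * |f.eval t|) * (A * (f.eval t).den) := by
            gcongr; exact hden t
        _ = 2 / |f.leadingCoeff| * A * ((f.eval t).num.natAbs : ℚ) := by
            rw [abs_num_eq]; ring
        _ ≤ 2 / |f.leadingCoeff| * A * ratHeight (f.eval t) := by gcongr
        _ ≤ B * ratHeight (f.eval t) := by
            gcongr
            rw [hB]
            have : 0 < M ^ d * A := by positivity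
            linarith
  exact_mod_cast key

/-! ### Radicals -/

lemma radNat_pos (m : ℕ) : 0 < radNat m :=
  Finset.prod_pos fun _ hp => (Nat.prime_of_mem_primeFactors hp).pos

lemma radNat_le_self {m : ℕ} (hm : m ≠ 0) : radNat m ≤ m :=
  Nat.le_of_dvd (Nat.pos_of_ne_zero hm) (Nat.prod_primeFactors_dvd m)

lemma radNat_le_mul {a b N : ℕ} (hN : N ≠ 0) (hb : b ≠ 0)
    (h : ∀ p : ℕ, p.Prime → p ∣ a → p ∣ N * b) : radNat a ≤ N * radNat b := by
  have hsub : a.primeFactors ⊆ N.primeFactors ∪ b.primeFactors := by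
    intro p hp
    have hp' := Nat.prime_of_mem_primeFactors hp
    rcases hp'.dvd_mul.mp (h p hp' (Nat.dvd_of_mem_primeFactors hp)) with h1 | h1
    · exact Finset.mem_union_left _ (Nat.mem_primeFactors.mpr ⟨hp', h1, hN⟩)
    · exact Finset.mem_union_right _ (Nat.mem_primeFactors.mpr ⟨hp', h1, hb⟩)
  have hpos : ∀ m : ℕ, ∀ p ∈ m.primeFactors, 1 ≤ p :=
    fun m p hp => (Nat.prime_of_mem_primeFactors hp).pos
  calc radNat a ≤ ∏ p ∈ N.primeFactors ∪ b.primeFactors, p :=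
        Finset.prod_le_prod_of_subset_of_one_le' hsub fun p hp _ => by
          rcases Finset.mem_union.mp hp with h | h
          exacts [hpos _ _ h, hpos _ _ h]
    _ ≤ (∏ p ∈ N.primeFactors ∪ b.primeFactors, p) * ∏ p ∈ N.primeFactors ∩ b.primeFactors, p :=
        Nat.le_mul_of_pos_right _ (Finset.prod_pos fun p hp =>
          hpos N p (Finset.mem_inter.mp hp).1)
    _ = radNat N * radNat b := Finset.prod_union_inter
    _ ≤ N * radNat b := Nat.mul_le_mul_right _ (radNat_le_self hN)

/-- The radical of `(numerator of f t) * (denominator of t)`: the product of the primes modulo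
which the point `t` of the projective line meets a zero of `f` or the point at infinity. -/
def suppRad (f : ℚ[X]) (t : ℚ) : ℕ := radNat ((f.eval t).num.natAbs * t.den)

lemma one_le_suppRad_real (f : ℚ[X]) (t : ℚ) : (1 : ℝ) ≤ suppRad f t := by
  exact_mod_cast radNat_pos _

/-- The radical lower bound for the point set (zeros of `f`) ∪ {∞}: up to constants,
`H(t) ^ (deg f - 1 - ε) ≤ suppRad f t`. For squarefree `f` the exponent is the number of
points minus two. The subtraction is truncated; in degree zero the bound is trivial. -/
def RadBound (f : ℚ[X]) : Prop :=
  ∀ ε : ℝ, 0 < ε → ∃ c : ℝ, 0 < c ∧ ∀ t : ℚ, f.eval t ≠ 0 →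
    (ratHeight t : ℝ) ^ (f.natDegree - 1) ≤ c * suppRad f t * (ratHeight t : ℝ) ^ ε

lemma RadBound.of_natDegree_le_one {f : ℚ[X]} (hf : f.natDegree ≤ 1) : RadBound f := by
  intro ε hε
  refine ⟨1, one_pos, fun t _ => ?_⟩
  rw [Nat.sub_eq_zero_of_le hf, pow_zero, one_mul]
  exact one_le_mul_of_one_le_of_one_le (one_le_suppRad_real f t)
    (Real.one_le_rpow (one_le_ratHeight_real t) hε.le)

/-- A bound for a point set implies the bound for each subset: removing the zeros of the cofactor
`e` costs at most `H(t) ^ deg e` in the radical, and the finitely many zeros of `e` themselves only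
affect the constant. -/
lemma RadBound.of_dvd {f h : ℚ[X]} (hh : h ≠ 0) (hfh : f ∣ h) (H : RadBound h) :
    RadBound f := by
  rcases Nat.eq_zero_or_pos f.natDegree with hf0 | hf0
  · exact .of_natDegree_le_one (by omega)
  obtain ⟨e, rfl⟩ := hfh
  have he : e ≠ 0 := right_ne_zero_of_mul hh
  have hf : f ≠ 0 := left_ne_zero_of_mul hh
  intro ε hε
  obtain ⟨c, hc, hb⟩ := H ε hε
  obtain ⟨C, hC, hCe⟩ := ratHeight_eval_le e
  set B : ℝ := ∑ t ∈ e.roots.toFinset, (ratHeight t : ℝ) ^ (f.natDegree - 1) with hB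
  have hB0 : 0 ≤ B := by positivity
  refine ⟨c * C + B, by positivity, fun t ht => ?_⟩
  have hH1 := one_le_ratHeight_real t
  have hHε : (1 : ℝ) ≤ (ratHeight t : ℝ) ^ ε := Real.one_le_rpow hH1 hε.le
  have hR1 := one_le_suppRad_real f t
  have hH0 : (0 : ℝ) < ratHeight t := by linarith
  by_cases het : e.eval t = 0
  · have hmem : t ∈ e.roots.toFinset := by
      rw [Multiset.mem_toFinset, mem_roots he]; exact het
    have h1 : (ratHeight t : ℝ) ^ (f.natDegree - 1) ≤ B :=
      Finset.single_le_sum (f := fun t : ℚ => (ratHeight t : ℝ) ^ (f.natDegree - 1))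
        (fun _ _ => by positivity) hmem
    calc (ratHeight t : ℝ) ^ (f.natDegree - 1) ≤ B := h1
      _ ≤ c * C + B := by linarith [mul_pos hc hC]
      _ ≤ (c * C + B) * suppRad f t := le_mul_of_one_le_right (by positivity) hR1
      _ ≤ _ := le_mul_of_one_le_right (by positivity) hHε
  · have hm : (f * e).eval t ≠ 0 := by rw [eval_mul]; exact mul_ne_zero ht het
    have h1 := hb t hm
    have hrad : (suppRad (f * e) t : ℝ) ≤ C * (ratHeight t : ℝ) ^ e.natDegree * suppRad f t := by
      have h2 : suppRad (f * e) t ≤ (e.eval t).num.natAbs * suppRad f t := by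
        refine radNat_le_mul (by simpa using het)
          (mul_ne_zero (by simpa using ht) t.den_ne_zero) fun p hp hpd => ?_
        rcases hp.dvd_mul.mp hpd with h3 | h3
        · have h4 : ((f * e).eval t).num ∣ (f.eval t).num * (e.eval t).num := by
            rw [eval_mul]
            exact ⟨_, Rat.num_mul_num_eq_num_mul_gcd _ _⟩
          have h5 := Int.natAbs_dvd_natAbs.mpr h4
          rw [Int.natAbs_mul] at h5
          rw [← mul_assoc, mul_comm (e.eval t).num.natAbs]
          exact (h3.trans h5).mul_right _
        · exact (h3.mul_left _).mul_left _
      have h3 : ((e.eval t).num.natAbs : ℝ) ≤ C * (ratHeight t : ℝ) ^ e.natDegree :=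
        le_trans (by exact_mod_cast le_max_left _ _) (hCe t)
      calc (suppRad (f * e) t : ℝ) ≤ (e.eval t).num.natAbs * suppRad f t := by exact_mod_cast h2
        _ ≤ _ := by gcongr
    have hdeg : (f * e).natDegree - 1 = (f.natDegree - 1) + e.natDegree := by
      rw [natDegree_mul hf he]; omega
    rw [hdeg, pow_add] at h1
    refine le_of_mul_le_mul_right (a := (ratHeight t : ℝ) ^ e.natDegree) ?_ (by positivity)
    calc _ ≤ _ := h1
      _ ≤ c * (C * (ratHeight t : ℝ) ^ e.natDegree * suppRad f t) * (ratHeight t : ℝ) ^ ε := by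
          gcongr
      _ = (c * C) * suppRad f t * (ratHeight t : ℝ) ^ ε * (ratHeight t : ℝ) ^ e.natDegree := by
          ring
      _ ≤ _ := by
          gcongr
          linarith

/-- The analytic half of the transport along a polynomial map `φ`. If `h` has the same zeros as
`g ∘ φ`, then `t` and `φ t` meet the respective point sets modulo the same primes, up to finitely
many primes, while `H(φ t) ≍ H(t) ^ deg φ`. -/
lemma RadBound.of_comp {g h φ : ℚ[X]} (hφ : φ.natDegree ≠ 0) (Hg : RadBound g)
    {k : ℕ} (hk : g.comp φ ∣ h ^ k)
    (hdeg : h.natDegree - 1 ≤ φ.natDegree * (g.natDegree - 1)) : RadBound h := by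
  intro ε hε
  have hφ0 : φ ≠ 0 := by rintro rfl; simp at hφ
  set d := φ.natDegree with hd
  have hdpos : (0 : ℝ) < d := by exact_mod_cast Nat.pos_of_ne_zero hφ
  obtain ⟨c, hc, hb⟩ := Hg (ε / d) (by positivity)
  obtain ⟨C₁, hC₁, hup⟩ := ratHeight_eval_le φ
  obtain ⟨C₂, hC₂, hlow⟩ := ratHeight_eval_ge φ hφ0
  obtain ⟨w, hw⟩ := hk
  obtain ⟨N₁, hN₁, hden₁⟩ := exists_den_eval_dvd φ
  obtain ⟨N₂, hN₂, hden₂⟩ := exists_den_eval_dvd w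
  refine ⟨C₂ ^ (g.natDegree - 1) * (c * (N₁ * N₂ : ℕ) * C₁ ^ (ε / d)), by positivity,
    fun t ht => ?_⟩
  have hwt : h.eval t ^ k = g.eval (φ.eval t) * w.eval t := by
    rw [← eval_pow, hw, eval_mul, eval_comp]
  have hgt : g.eval (φ.eval t) ≠ 0 := by
    intro h0
    rw [h0, zero_mul] at hwt
    exact ht (eq_zero_of_pow_eq_zero hwt)
  have hrad : suppRad g (φ.eval t) ≤ N₁ * N₂ * suppRad h t := by
    refine radNat_le_mul (mul_ne_zero hN₁ hN₂)
      (mul_ne_zero (by simpa using ht) t.den_ne_zero) fun p hp hpd => ?_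
    by_cases hpt : p ∣ t.den
    · exact (hpt.mul_left _).mul_left _
    by_cases hpN : p ∣ N₁ * N₂
    · exact hpN.mul_right _
    have hp1 : ¬ p ∣ (φ.eval t).den := fun hh => by
      rcases hp.dvd_mul.mp (hh.trans (hden₁ t)) with h' | h'
      · exact hpN (h'.mul_right _)
      · exact hpt (hp.dvd_of_dvd_pow h')
    have hp2 : ¬ p ∣ (w.eval t).den := fun hh => by
      rcases hp.dvd_mul.mp (hh.trans (hden₂ t)) with h' | h'
      · exact hpN (h'.mul_left _)
      · exact hpt (hp.dvd_of_dvd_pow h')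
    have hp3 := (hp.dvd_mul.mp hpd).resolve_right hp1
    have hnum : (h.eval t).num ^ k * ((g.eval (φ.eval t)).den * (w.eval t).den) =
        (g.eval (φ.eval t)).num * (w.eval t).num * (h.eval t).den ^ k := by
      have : (((h.eval t).num ^ k * ((g.eval (φ.eval t)).den * (w.eval t).den) : ℤ) : ℚ) =
        ((g.eval (φ.eval t)).num * (w.eval t).num * (h.eval t).den ^ k : ℤ) := by
        push_cast
        rw [← Rat.mul_den_eq_num (h.eval t), ← Rat.mul_den_eq_num (g.eval (φ.eval t)),
          ← Rat.mul_den_eq_num (w.eval t), mul_pow, hwt]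
        ring
      exact_mod_cast this
    have hnum' := congrArg Int.natAbs hnum
    simp only [Int.natAbs_mul, Int.natAbs_pow, Int.natAbs_natCast] at hnum'
    have hp4 : p ∣ (h.eval t).num.natAbs ^ k *
        ((g.eval (φ.eval t)).den * (w.eval t).den) := by
      rw [hnum', mul_assoc]; exact hp3.mul_right _
    have hp5 : ¬ p ∣ (g.eval (φ.eval t)).den := fun hh =>
      hp.one_lt.ne' (Nat.eq_one_of_dvd_coprimes (g.eval (φ.eval t)).reduced hp3 hh)
    rcases hp.dvd_mul.mp hp4 with h' | h'
    · exact ((hp.dvd_of_dvd_pow h').mul_right _).mul_left _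
    · rcases hp.dvd_mul.mp h' with h' | h'
      exacts [(hp5 h').elim, (hp2 h').elim]
  have hH1 := one_le_ratHeight_real t
  have hH0 : (0 : ℝ) < ratHeight t := by linarith
  have hHφ := one_le_ratHeight_real (φ.eval t)
  have hupε : (ratHeight (φ.eval t) : ℝ) ^ (ε / d) ≤ C₁ ^ (ε / d) * (ratHeight t : ℝ) ^ ε := by
    calc (ratHeight (φ.eval t) : ℝ) ^ (ε / d) ≤ (C₁ * (ratHeight t : ℝ) ^ d) ^ (ε / d) :=
          Real.rpow_le_rpow (by positivity) (hup t) (by positivity)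
      _ = C₁ ^ (ε / d) * (ratHeight t : ℝ) ^ ε := by
          rw [Real.mul_rpow hC₁.le (by positivity), ← Real.rpow_natCast, ← Real.rpow_mul hH0.le,
            mul_div_cancel₀ _ hdpos.ne']
  calc (ratHeight t : ℝ) ^ (h.natDegree - 1)
      ≤ (ratHeight t : ℝ) ^ (d * (g.natDegree - 1)) := pow_le_pow_right₀ hH1 hdeg
    _ = ((ratHeight t : ℝ) ^ d) ^ (g.natDegree - 1) := pow_mul _ _ _
    _ ≤ (C₂ * ratHeight (φ.eval t)) ^ (g.natDegree - 1) := by gcongr; exact hlow t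
    _ = C₂ ^ (g.natDegree - 1) * (ratHeight (φ.eval t) : ℝ) ^ (g.natDegree - 1) := mul_pow _ _ _
    _ ≤ C₂ ^ (g.natDegree - 1) *
        (c * suppRad g (φ.eval t) * (ratHeight (φ.eval t) : ℝ) ^ (ε / d)) := by
        gcongr; exact hb _ hgt
    _ ≤ C₂ ^ (g.natDegree - 1) *
        (c * ((N₁ * N₂ : ℕ) * suppRad h t) * (C₁ ^ (ε / d) * (ratHeight t : ℝ) ^ ε)) := by
        gcongr
        exact_mod_cast hrad
    _ = _ := by ring

/-! ### Three points -/

lemma exists_abc_triple (t : ℚ) (h0 : t ≠ 0) (h1 : t ≠ 1) :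
    ∃ a b c : ℕ, 0 < a ∧ 0 < b ∧ 0 < c ∧ Nat.Coprime a b ∧ a + b = c ∧ ratHeight t ≤ c ∧
      a * b * c = t.num.natAbs * (t.num - t.den).natAbs * t.den := by
  have hred := t.reduced
  have hden := t.den_pos
  have hn0 : t.num ≠ 0 := by simpa using h0
  have hn1 : t.num ≠ t.den := by
    intro h
    apply h1
    rw [← Rat.num_div_den t, h]
    exact div_self (by exact_mod_cast hden.ne')
  rw [ratHeight]
  generalize t.num = u at *
  generalize t.den = v at *
  rcases lt_or_gt_of_ne hn0 with h | h
  · refine ⟨u.natAbs, v, (u - v).natAbs, by omega, hden, by omega, hred, by omega,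
      max_le (by omega) (by omega), by ring⟩
  · obtain ⟨n, rfl⟩ := Int.eq_ofNat_of_zero_le h.le
    simp only [Int.natAbs_natCast] at *
    rcases lt_or_gt_of_ne hn1 with h' | h'
    · refine ⟨n, ((n : ℤ) - v).natAbs, v, by omega, by omega, hden, ?_, by omega,
        max_le (by omega) (by omega), rfl⟩
      have e : ((n : ℤ) - v).natAbs = v - n := by omega
      rw [e]
      exact (Nat.coprime_sub_self_right (by omega)).mpr hred
    · refine ⟨((n : ℤ) - v).natAbs, v, n, by omega, by omega, by omega, ?_, by omega,
        max_le (by omega) (by omega), by ring⟩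
      have e : ((n : ℤ) - v).natAbs = n - v := by omega
      rw [e]
      exact (Nat.coprime_sub_self_left (by omega)).mpr hred

/-- The abc-conjecture, applied to `u + (v - u) = v`, is the bound for the points `0, 1, ∞`. -/
lemma ABCConjecture.radBound (habc : ABCConjecture) : RadBound (X * (X - C 1)) := by
  intro ε hε
  obtain ⟨K, hK, hb⟩ := habc ε hε
  refine ⟨max K 1, by positivity, fun t ht => ?_⟩
  have hev : (X * (X - C 1) : ℚ[X]).eval t = t * (t - 1) := by simp
  have hdeg : (X * (X - C 1) : ℚ[X]).natDegree = 2 := by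
    rw [natDegree_mul X_ne_zero (X_sub_C_ne_zero 1), natDegree_X,
      natDegree_X_sub_C]
  have ht' := ht
  rw [hev] at ht'
  have ht0 : t ≠ 0 := left_ne_zero_of_mul ht'
  have ht1 : t ≠ 1 := sub_ne_zero.mp (right_ne_zero_of_mul ht')
  obtain ⟨a, b, c, ha, hb', hc, hcop, habc', hH, hprod⟩ := exists_abc_triple t ht0 ht1
  have h1 := hb a b c ha hb' hc hcop habc'
  have hrad : radNat (a * b * c) ≤ suppRad (X * (X - C 1)) t := by
    have := radNat_le_mul (a := a * b * c) (N := 1)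
      (b := ((X * (X - C 1) : ℚ[X]).eval t).num.natAbs * t.den) one_ne_zero
      (mul_ne_zero (by simpa using ht) t.den_ne_zero) (fun p hp hpd => ?_)
    · rwa [one_mul] at this
    rw [one_mul, hev]
    by_cases hpt : p ∣ t.den
    · exact hpt.mul_left _
    rw [hprod] at hpd
    have hpd' := (hp.dvd_mul.mp hpd).resolve_right hpt
    have hnum : (t * (t - 1)).num * t.den ^ 2 =
        t.num * (t.num - t.den) * (t * (t - 1)).den := by
      have : (((t * (t - 1)).num * t.den ^ 2 : ℤ) : ℚ) =
          (t.num * (t.num - t.den) * (t * (t - 1)).den : ℤ) := by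
        push_cast
        rw [← Rat.mul_den_eq_num (t * (t - 1)), ← Rat.mul_den_eq_num t]
        ring
      exact_mod_cast this
    have hnum' := congrArg Int.natAbs hnum
    simp only [Int.natAbs_mul, Int.natAbs_pow, Int.natAbs_natCast] at hnum'
    have h3 : p ∣ (t * (t - 1)).num.natAbs * t.den ^ 2 := by
      rw [hnum']; exact hpd'.mul_right _
    rcases hp.dvd_mul.mp h3 with h | h
    · exact h.mul_right _
    · exact (hpt (hp.dvd_of_dvd_pow h)).elim
  rw [hdeg, show 2 - 1 = 1 from rfl, pow_one]
  have hH1 := one_le_ratHeight_real t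
  have hH0 : (0 : ℝ) < ratHeight t := by linarith
  have hR1 := one_le_suppRad_real (X * (X - C 1)) t
  set R : ℝ := (suppRad (X * (X - C 1)) t : ℝ)
  have hHε : (1 : ℝ) ≤ (ratHeight t : ℝ) ^ ε := Real.one_le_rpow hH1 hε.le
  have h2 : (ratHeight t : ℝ) ≤ K * R ^ (1 + ε) :=
    calc (ratHeight t : ℝ) ≤ c := by exact_mod_cast hH
      _ ≤ _ := h1
      _ ≤ K * R ^ (1 + ε) := by
          gcongr
          exact Nat.cast_le.mpr hrad
  rcases le_total R (ratHeight t) with hle | hle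
  · calc (ratHeight t : ℝ) ≤ K * R ^ (1 + ε) := h2
      _ = K * R * R ^ ε := by
          rw [Real.rpow_add (by linarith), Real.rpow_one, mul_assoc]
      _ ≤ max K 1 * R * (ratHeight t : ℝ) ^ ε := by
          gcongr
          exact le_max_left _ _
  · calc (ratHeight t : ℝ) ≤ 1 * R * 1 := by linarith
      _ ≤ max K 1 * R * (ratHeight t : ℝ) ^ ε := by
          gcongr
          exact le_max_right _ _

/-! ### Transport along a polynomial map -/

lemma dvd_of_forall_irreducible_pow {a b : ℚ[X]} (ha : a ≠ 0)
    (h : ∀ q : ℚ[X], Irreducible q → ∀ e : ℕ, q ^ e ∣ a → q ^ e ∣ b) : a ∣ b := by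
  rw [UniqueFactorizationMonoid.dvd_iff_emultiplicity_le ha]
  exact fun q hq => emultiplicity_le_emultiplicity_iff.mpr (h q hq.irreducible)

lemma dvd_of_squarefree_of_forall_irreducible {a b : ℚ[X]} (ha : Squarefree a)
    (h : ∀ q : ℚ[X], Irreducible q → q ∣ a → q ∣ b) : a ∣ b := by
  refine dvd_of_forall_irreducible_pow ha.ne_zero fun q hq e he => ?_
  match e, he with
  | 0, _ => simp
  | 1, he => simpa using h q hq (by simpa using he)
  | e + 2, he =>
    exact (hq.not_isUnit (ha q ((Dvd.intro (q ^ e) (by ring)).trans he))).elim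

/-- In characteristic zero, differentiating lowers the multiplicity of a zero by exactly one. -/
lemma pow_succ_dvd_of_pow_dvd_derivative {q G : ℚ[X]} (hq : Irreducible q) (hG : G ≠ 0)
    (hqG : q ∣ G) {e : ℕ} (he : q ^ e ∣ derivative G) : q ^ (e + 1) ∣ G := by
  obtain ⟨w, hw, hqw⟩ :=
    (FiniteMultiplicity.of_not_isUnit hq.not_isUnit hG).exists_eq_pow_mul_and_not_dvd
  set m := multiplicity q G
  rcases Nat.lt_or_ge e m with hem | hem
  · exact (pow_dvd_pow q hem).trans ⟨w, hw⟩
  exfalso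
  obtain ⟨k, hk⟩ : ∃ k, m = k + 1 := by
    rcases Nat.eq_zero_or_pos m with h0 | h0
    · rw [h0, pow_zero, one_mul] at hw
      exact (hqw (hw ▸ hqG)).elim
    · exact ⟨m - 1, by omega⟩
  have h1 : q ^ (k + 1) ∣ derivative G := (pow_dvd_pow q (hk ▸ hem)).trans he
  rw [hw, hk, derivative_mul, derivative_pow_succ] at h1
  have h2 := (dvd_add_left (dvd_mul_right (q ^ (k + 1)) (derivative w))).mp h1
  have h3 : q ^ k * q ∣ q ^ k * ((C ((k : ℚ) + 1)) * (derivative q * w)) := by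
    rw [← pow_succ]
    convert h2 using 1
    ring
  have h4 := (mul_dvd_mul_iff_left (pow_ne_zero k hq.ne_zero)).mp h3
  rcases hq.prime.dvd_or_dvd h4 with h5 | h5
  · have : (k : ℚ) + 1 ≠ 0 := by positivity
    exact hq.not_isUnit (isUnit_of_dvd_unit h5 (isUnit_C.mpr this.isUnit))
  rcases hq.prime.dvd_or_dvd h5 with h6 | h6
  · exact hq.not_isUnit (hq.separable.isUnit_of_dvd' dvd_rfl h6)
  · exact hqw h6

/-- Transport of the bound along a polynomial map `φ` whose critical values are zeros of `g`
(hypothesis `hcrit`), to a set of points lying over zeros of `g` (hypothesis `hf`). By the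
Riemann-Hurwitz count in its polynomial form, `(g ∘ φ) / φ'` has the same zeros as `g ∘ φ`, and
its degree minus one is `deg φ * (deg g - 1)`. -/
lemma RadBound.transport {f g φ : ℚ[X]} (hφ : φ.natDegree ≠ 0) (hg : g ≠ 0) (Hg : RadBound g)
    (hcrit : ∀ q : ℚ[X], Irreducible q → q ∣ derivative φ → q ∣ g.comp φ)
    (hsq : Squarefree f) (hf : ∀ q : ℚ[X], Irreducible q → q ∣ f → q ∣ g.comp φ) :
    RadBound f := by
  have hG : g.comp φ ≠ 0 := by
    intro h0
    rcases comp_eq_zero_iff.mp h0 with h | h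
    · exact hg h
    · rw [h.2] at hφ; simp at hφ
  have hφ' : derivative φ ≠ 0 := fun h0 => hφ (derivative_eq_zero.mp h0)
  have hmult : ∀ q : ℚ[X], Irreducible q → q ∣ g.comp φ → ∀ e : ℕ, q ^ e ∣ derivative φ →
      q ^ (e + 1) ∣ g.comp φ := fun q hq hqG e he =>
    pow_succ_dvd_of_pow_dvd_derivative hq hG hqG (by
      rw [derivative_comp]; exact he.mul_right _)
  obtain ⟨h, hh⟩ : derivative φ ∣ g.comp φ := by
    refine dvd_of_forall_irreducible_pow hφ' fun q hq e he => ?_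
    rcases Nat.eq_zero_or_pos e with rfl | he0
    · simp
    · exact (pow_dvd_pow q (Nat.le_succ e)).trans
        (hmult q hq (hcrit q hq ((dvd_pow_self q he0.ne').trans he)) e he)
  have hh0 : h ≠ 0 := by rintro rfl; exact hG (by rw [hh, mul_zero])
  have hroots : ∀ q : ℚ[X], Irreducible q → q ∣ g.comp φ → q ∣ h := by
    intro q hq hqG
    obtain ⟨w, hw, hqw⟩ :=
      (FiniteMultiplicity.of_not_isUnit hq.not_isUnit hφ').exists_eq_pow_mul_and_not_dvd
    have h1 := hmult q hq hqG _ ⟨w, hw⟩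
    rw [hh, pow_succ] at h1
    nth_rewrite 2 [hw] at h1
    rw [mul_assoc] at h1
    have h2 := (mul_dvd_mul_iff_left (pow_ne_zero _ hq.ne_zero)).mp h1
    exact (hq.prime.dvd_or_dvd h2).resolve_left hqw
  have hrad : UniqueFactorizationMonoid.radical (g.comp φ) ∣ h :=
    dvd_of_squarefree_of_forall_irreducible UniqueFactorizationMonoid.squarefree_radical
      fun q hq hqr => hroots q hq (hqr.trans UniqueFactorizationMonoid.radical_dvd_self)
  obtain ⟨k, hk⟩ := (UniqueFactorizationMonoid.exists_dvd_pow_iff_radical_dvd hG).mpr hrad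
  refine RadBound.of_dvd hh0
    (dvd_of_squarefree_of_forall_irreducible hsq fun q hq hqf => hroots q hq (hf q hq hqf))
    (RadBound.of_comp hφ Hg hk ?_)
  have hdeg := congrArg natDegree hh
  rw [natDegree_comp, natDegree_mul hφ' hh0, natDegree_derivative] at hdeg
  rw [Nat.mul_sub, mul_one, mul_comm, hdeg]
  omega

/-! ### Belyi's reduction for rational points -/

lemma squarefree_prod_X_sub_C (S : Finset ℚ) : Squarefree (∏ a ∈ S, (X - C a)) :=
  (separable_prod_X_sub_C_iff' (f := fun a : ℚ => a).mpr fun _ _ _ _ h => h).squarefree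

lemma X_sub_C_dvd_prod_comp {T : Finset ℚ} {φ : ℚ[X]} {x : ℚ} (hx : φ.eval x ∈ T) :
    X - C x ∣ (∏ s ∈ T, (X - C s)).comp φ := by
  rw [dvd_iff_isRoot, IsRoot.def, eval_comp, eval_prod]
  exact Finset.prod_eq_zero hx (by simp)

lemma radBound_prod_X_sub_C_pair (habc : ABCConjecture) {a c : ℚ} (hac : a ≠ c) :
    RadBound (∏ x ∈ {a, c}, (X - C x)) := by
  have hca : c - a ≠ 0 := sub_ne_zero.mpr hac.symm
  have hinv : (c - a)⁻¹ ≠ 0 := inv_ne_zero hca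
  set φ : ℚ[X] := C (c - a)⁻¹ * (X - C a) with hφ
  have hder : derivative φ = C (c - a)⁻¹ := by simp [hφ]
  refine RadBound.transport (φ := φ) (g := X * (X - C 1)) ?_
    (mul_ne_zero X_ne_zero (X_sub_C_ne_zero 1)) habc.radBound ?_ (squarefree_prod_X_sub_C _) ?_
  · rw [hφ, natDegree_C_mul hinv, natDegree_X_sub_C]
    exact one_ne_zero
  · intro q hq hqd
    rw [hder] at hqd
    exact (hq.not_isUnit (isUnit_of_dvd_unit hqd (isUnit_C.mpr hinv.isUnit))).elim
  · intro q hq hqf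
    obtain ⟨x, hx, hqx⟩ := hq.prime.exists_mem_finset_dvd hqf
    refine hqx.trans ?_
    rw [dvd_iff_isRoot, IsRoot.def, eval_comp]
    rcases Finset.mem_insert.mp hx with rfl | hx
    · simp [hφ]
    · rw [Finset.mem_singleton.mp hx]
      simp [hφ, inv_mul_cancel₀ hca]

/-- The bound for rational points. Given three of the points `a < b < c`, the map
`(x - a) ^ m * (x - c) ^ n` with `m / n = (b - a) / (c - b)` is critical only at `a, b, c`, and
identifies `a` with `c`, so that its image has fewer points. -/
lemma radBound_prod_X_sub_C (habc : ABCConjecture) (k : ℕ) :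
    ∀ S : Finset ℚ, S.card = k → RadBound (∏ x ∈ S, (X - C x)) := by
  induction k using Nat.strong_induction_on with
  | _ k ih =>
  intro S hS
  have hdegS : (∏ x ∈ S, (X - C x)).natDegree = k := by
    rw [natDegree_prod_of_monic _ _ fun x _ => monic_X_sub_C x]
    simp [hS]
  rcases Nat.lt_or_ge k 2 with hk | hk
  · exact .of_natDegree_le_one (by omega)
  rcases hk.eq_or_lt with hk | hk
  · obtain ⟨a, c, hac, rfl⟩ := Finset.card_eq_two.mp (hS.trans hk.symm)
    exact radBound_prod_X_sub_C_pair habc hac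
  have hne : S.Nonempty := Finset.card_pos.mp (by omega)
  set a := S.min' hne with ha
  set c := S.max' hne with hc
  have haS : a ∈ S := S.min'_mem hne
  have hcS : c ∈ S := S.max'_mem hne
  obtain ⟨b, hb⟩ : ((S.erase a).erase c).Nonempty := by
    rw [← Finset.card_pos]
    have h1 := Finset.pred_card_le_card_erase (s := S) (a := a)
    have h2 := Finset.pred_card_le_card_erase (s := S.erase a) (a := c)
    omega
  have hbc' := Finset.ne_of_mem_erase hb
  have hb1 := Finset.mem_of_mem_erase hb
  have hab' := Finset.ne_of_mem_erase hb1
  have hbS := Finset.mem_of_mem_erase hb1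
  have hab : a < b := lt_of_le_of_ne (S.min'_le b hbS) hab'.symm
  have hbc : b < c := lt_of_le_of_ne (S.le_max' b hbS) hbc'
  have hr : 0 < (b - a) / (c - b) := div_pos (by linarith) (by linarith)
  obtain ⟨m, hm⟩ : ∃ m : ℕ, ((b - a) / (c - b)).num = m + 1 := by
    have := Rat.num_pos.mpr hr
    exact ⟨(((b - a) / (c - b)).num - 1).toNat, by omega⟩
  obtain ⟨n, hn⟩ : ∃ n : ℕ, ((b - a) / (c - b)).den = n + 1 :=
    ⟨((b - a) / (c - b)).den - 1, by have := ((b - a) / (c - b)).den_pos; omega⟩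
  have hmn : ((m : ℚ) + 1) * (c - b) = (n + 1) * (b - a) := by
    have h1 := Rat.mul_den_eq_num ((b - a) / (c - b))
    rw [hm, hn] at h1
    push_cast at h1
    rw [← h1]
    have : c - b ≠ 0 := by linarith
    field_simp
  set φ : ℚ[X] := (X - C a) ^ (m + 1) * (X - C c) ^ (n + 1) with hφ
  have hder : derivative φ = (X - C a) ^ m * ((X - C c) ^ n * (C ((m : ℚ) + n + 2) * (X - C b))) := by
    have e : C ((m : ℚ) + 1) * (C c - C b) = C ((n : ℚ) + 1) * (C b - C a) := by
      rw [← C_sub, ← C_sub, ← C_mul, ← C_mul, hmn]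
    rw [hφ, derivative_mul, derivative_pow_succ, derivative_pow_succ, derivative_X_sub_C,
      derivative_X_sub_C]
    simp only [map_add, map_natCast, map_one, map_ofNat] at e ⊢
    linear_combination (-(X - C a) ^ m * (X - C c) ^ n) * e
  have hφa : φ.eval a = 0 := by simp [hφ]
  have hφc : φ.eval c = 0 := by simp [hφ]
  set T := S.image (fun x => φ.eval x) with hT
  have hTcard : T.card < k := by
    rw [← hS]
    refine lt_of_le_of_ne Finset.card_image_le fun h => ?_
    have := Finset.card_image_iff.mp h haS hcS (hφa.trans hφc.symm)
    linarith
  have hdvd : ∀ x ∈ S, X - C x ∣ (∏ s ∈ T, (X - C s)).comp φ := fun x hx =>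
    X_sub_C_dvd_prod_comp (Finset.mem_image_of_mem _ hx)
  refine RadBound.transport (φ := φ) ?_ (squarefree_prod_X_sub_C T).ne_zero
    (ih _ hTcard T rfl) ?_ (squarefree_prod_X_sub_C S) ?_
  · rw [hφ, Monic.natDegree_mul ((monic_X_sub_C a).pow _) ((monic_X_sub_C c).pow _),
      natDegree_pow, natDegree_X_sub_C]
    omega
  · intro q hq hqd
    rw [hder] at hqd
    rcases hq.prime.dvd_or_dvd hqd with h | h
    · exact (hq.prime.dvd_of_dvd_pow h).trans (hdvd a haS)
    rcases hq.prime.dvd_or_dvd h with h | h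
    · exact (hq.prime.dvd_of_dvd_pow h).trans (hdvd c hcS)
    rcases hq.prime.dvd_or_dvd h with h | h
    · have : (m : ℚ) + n + 2 ≠ 0 := by positivity
      exact (hq.not_isUnit (isUnit_of_dvd_unit h (isUnit_C.mpr this.isUnit))).elim
    · exact h.trans (hdvd b hbS)
  · intro q hq hqf
    obtain ⟨x, hx, hqx⟩ := hq.prime.exists_mem_finset_dvd hqf
    exact hqx.trans (hdvd x hx)

/-! ### Belyi's reduction from algebraic to rational points -/

/-- If `q` is the minimal polynomial of `β`, then `m` can be taken to be the minimal polynomial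
of `φ β`. -/
lemma exists_pushforward (φ q : ℚ[X]) (hq : Irreducible q) :
    ∃ m : ℚ[X], m.Monic ∧ Irreducible m ∧ m.natDegree ≤ q.natDegree ∧ q ∣ m.comp φ ∧
      (q ∣ φ → m = X) := by
  by_cases hqφ : q ∣ φ
  · exact ⟨X, monic_X, irreducible_X, by rw [natDegree_X]; exact hq.natDegree_pos,
      by simpa using hqφ, fun _ => rfl⟩
  have : Fact (Irreducible q) := ⟨hq⟩
  have : FiniteDimensional ℚ (AdjoinRoot q) := (AdjoinRoot.powerBasis hq.ne_zero).finite
  set x : AdjoinRoot q := aeval (AdjoinRoot.root q) φ with hx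
  have hx_int : IsIntegral ℚ x := .of_finite ℚ x
  refine ⟨minpoly ℚ x, minpoly.monic hx_int, minpoly.irreducible hx_int, ?_, ?_,
    fun h => (hqφ h).elim⟩
  · calc (minpoly ℚ x).natDegree ≤ Module.finrank ℚ (AdjoinRoot q) := minpoly.natDegree_le x
      _ = q.natDegree := by
          rw [(AdjoinRoot.powerBasis hq.ne_zero).finrank, AdjoinRoot.powerBasis_dim]
  · rw [← AdjoinRoot.mk_eq_zero, ← AdjoinRoot.aeval_eq, aeval_comp]
    exact minpoly.aeval ℚ x

lemma squarefree_prod_monic_irreducible {𝓕 : Finset ℚ[X]}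
    (h𝓕 : ∀ p ∈ 𝓕, p.Monic ∧ Irreducible p) : Squarefree (∏ p ∈ 𝓕, p) := by
  refine Finset.squarefree_prod_of_pairwise_isCoprime (fun p hp q hq hpq => ?_)
    fun p hp => (h𝓕 p hp).2.squarefree
  refine (h𝓕 p hp).2.isRelPrime_iff_not_dvd.mpr fun h => ?_
  exact hpq (eq_of_monic_of_associated (h𝓕 p hp).1 (h𝓕 q hq).1
    ((h𝓕 p hp).2.associated_of_dvd (h𝓕 q hq).2 h))

lemma sum_natDegree_sub_one_primeFactors_le {f : ℚ[X]} (hf : f ≠ 0) :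
    ∑ q ∈ UniqueFactorizationMonoid.primeFactors f, (q.natDegree - 1) ≤ f.natDegree - 1 := by
  classical
  set D := UniqueFactorizationMonoid.primeFactors f with hD
  have hirr : ∀ q ∈ D, Irreducible q := fun q hq =>
    UniqueFactorizationMonoid.irreducible_of_normalized_factor q
      (UniqueFactorizationMonoid.mem_primeFactors.mp hq)
  have h1 : ∑ q ∈ D, q.natDegree ≤ f.natDegree := by
    rw [← natDegree_prod _ _ fun q hq => (hirr q hq).ne_zero]
    exact natDegree_le_of_dvd UniqueFactorizationMonoid.radical_dvd_self hf
  rcases D.eq_empty_or_nonempty with h0 | ⟨q₀, hq₀⟩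
  · simp [h0]
  · rw [← Finset.add_sum_erase _ _ hq₀] at h1 ⊢
    have h2 : ∑ q ∈ D.erase q₀, (q.natDegree - 1) ≤ ∑ q ∈ D.erase q₀, q.natDegree :=
      Finset.sum_le_sum fun _ _ => Nat.sub_le _ _
    have h3 := (hirr q₀ hq₀).natDegree_pos
    omega

/-- The bound for a Galois-stable set of algebraic points, given by their minimal polynomials, by
induction on `∑ (deg p - 1)`. The map `t ↦ p t` for one of the minimal polynomials `p` of degree
at least two sends the zeros of `p` to the rational point `0`, does not increase the degrees of
the other points, and its critical values contribute at most `deg p - 2` to the sum. -/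
lemma radBound_prod_irreducible (habc : ABCConjecture) (k : ℕ) :
    ∀ 𝓕 : Finset ℚ[X], (∀ p ∈ 𝓕, p.Monic ∧ Irreducible p) →
      ∑ p ∈ 𝓕, (p.natDegree - 1) = k → RadBound (∏ p ∈ 𝓕, p) := by
  classical
  induction k using Nat.strong_induction_on with
  | _ k ih =>
  intro 𝓕 h𝓕 hk
  by_cases hlin : ∀ p ∈ 𝓕, p.natDegree = 1
  · refine RadBound.transport (φ := X) (g := ∏ x ∈ 𝓕.image (fun p => -p.coeff 0), (X - C x))
      (by simp) (squarefree_prod_X_sub_C _).ne_zero (radBound_prod_X_sub_C habc _ _ rfl) ?_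
      (squarefree_prod_monic_irreducible h𝓕) ?_
    · intro q hq hqd
      rw [derivative_X] at hqd
      exact (hq.not_isUnit (isUnit_of_dvd_one hqd)).elim
    · intro q hq hqf
      obtain ⟨p, hp, hqp⟩ := hq.prime.exists_mem_finset_dvd hqf
      refine hqp.trans ?_
      have e : p = X - C (-p.coeff 0) := by
        conv_lhs => rw [(h𝓕 p hp).1.eq_X_add_C (hlin p hp)]
        simp
      rw [e]
      refine X_sub_C_dvd_prod_comp ?_
      rw [eval_X]
      exact Finset.mem_image_of_mem (fun p : ℚ[X] => -p.coeff 0) hp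
  push Not at hlin
  obtain ⟨p, hp, hp1⟩ := hlin
  have hpirr := (h𝓕 p hp).2
  have hpdeg := hpirr.natDegree_pos
  have hp' : derivative p ≠ 0 := fun h0 => hpdeg.ne' (derivative_eq_zero.mp h0)
  set D := UniqueFactorizationMonoid.primeFactors (derivative p) with hD
  have hDirr : ∀ q ∈ D, Irreducible q := fun q hq =>
    UniqueFactorizationMonoid.irreducible_of_normalized_factor q
      (UniqueFactorizationMonoid.mem_primeFactors.mp hq)
  have hirr : ∀ q ∈ 𝓕 ∪ D, Irreducible q := fun q hq => by
    rcases Finset.mem_union.mp hq with h | h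
    exacts [(h𝓕 q h).2, hDirr q h]
  choose push hmonic hpirr' hpdeg' hpdvd hpX using exists_pushforward p
  set P : ℚ[X] → ℚ[X] := fun q => if hq : Irreducible q then push q hq else 1 with hP
  have hPeq : ∀ q (hq : Irreducible q), P q = push q hq := fun q hq => dif_pos hq
  set 𝓖 := (𝓕 ∪ D).image P with h𝓖
  have h𝓖irr : ∀ m ∈ 𝓖, m.Monic ∧ Irreducible m := by
    intro m hm
    obtain ⟨q, hq, rfl⟩ := Finset.mem_image.mp hm
    rw [hPeq q (hirr q hq)]
    exact ⟨hmonic q _, hpirr' q _⟩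
  have hPdeg : ∀ q, Irreducible q → (P q).natDegree ≤ q.natDegree := fun q hq => by
    rw [hPeq q hq]; exact hpdeg' q hq
  have hdvd : ∀ q ∈ 𝓕 ∪ D, q ∣ (∏ m ∈ 𝓖, m).comp p := by
    intro q hq
    have h1 : q ∣ (P q).comp p := by rw [hPeq q (hirr q hq)]; exact hpdvd q _
    rw [prod_comp]
    exact h1.trans (Finset.dvd_prod_of_mem (fun m => m.comp p)
      (Finset.mem_image_of_mem P hq))
  have hlt : ∑ m ∈ 𝓖, (m.natDegree - 1) < k := by
    have h1 : ∑ m ∈ 𝓖, (m.natDegree - 1) ≤ ∑ q ∈ 𝓕 ∪ D, ((P q).natDegree - 1) :=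
      Finset.sum_image_le_of_nonneg fun _ _ => Nat.zero_le _
    have h2 : ∑ q ∈ 𝓕 ∪ D, ((P q).natDegree - 1) ≤
        ∑ q ∈ 𝓕, ((P q).natDegree - 1) + ∑ q ∈ D, ((P q).natDegree - 1) := by
      rw [← Finset.sum_union_inter]; exact Nat.le_add_right _ _
    have h3 : ∑ q ∈ D, ((P q).natDegree - 1) ≤ ∑ q ∈ D, (q.natDegree - 1) :=
      Finset.sum_le_sum fun q hq => Nat.sub_le_sub_right (hPdeg q (hDirr q hq)) 1
    have h4 := sum_natDegree_sub_one_primeFactors_le hp'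
    rw [← hD, natDegree_derivative] at h4
    have h5 : ∑ q ∈ 𝓕.erase p, ((P q).natDegree - 1) ≤ ∑ q ∈ 𝓕.erase p, (q.natDegree - 1) :=
      Finset.sum_le_sum fun q hq => Nat.sub_le_sub_right
        (hPdeg q (h𝓕 q (Finset.mem_of_mem_erase hq)).2) 1
    have h6 : (P p).natDegree = 1 := by
      rw [hPeq p hpirr, hpX p hpirr dvd_rfl, natDegree_X]
    have h7 := Finset.add_sum_erase 𝓕 (fun q => q.natDegree - 1) hp
    have h8 := Finset.add_sum_erase 𝓕 (fun q => (P q).natDegree - 1) hp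
    simp only [h6] at h7 h8
    omega
  refine RadBound.transport (φ := p) hpdeg.ne' (squarefree_prod_monic_irreducible h𝓖irr).ne_zero
    (ih _ hlt 𝓖 h𝓖irr rfl) ?_ (squarefree_prod_monic_irreducible h𝓕) ?_
  · intro q hq hqd
    obtain ⟨q', hq', hass⟩ :=
      UniqueFactorizationMonoid.exists_mem_normalizedFactors_of_dvd hp' hq hqd
    exact hass.dvd.trans (hdvd q' (Finset.mem_union_right _
      (UniqueFactorizationMonoid.mem_primeFactors.mpr hq')))
  · intro q hq hqf
    obtain ⟨p₁, hp₁, hqp₁⟩ := hq.prime.exists_mem_finset_dvd hqf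
    exact hqp₁.trans (hdvd p₁ (Finset.mem_union_left _ hp₁))

/-- The abc-conjecture implies the bound for every squarefree polynomial. -/
lemma ABCConjecture.radBound_of_squarefree (habc : ABCConjecture) {f : ℚ[X]}
    (hf : Squarefree f) : RadBound f := by
  classical
  have hirr : ∀ q ∈ UniqueFactorizationMonoid.primeFactors f, q.Monic ∧ Irreducible q := by
    intro q hq
    have hq' := UniqueFactorizationMonoid.mem_primeFactors.mp hq
    have h1 := UniqueFactorizationMonoid.irreducible_of_normalized_factor q hq'
    refine ⟨?_, h1⟩
    rw [← UniqueFactorizationMonoid.normalize_normalized_factor q hq']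
    exact monic_normalize h1.ne_zero
  refine RadBound.of_dvd (UniqueFactorizationMonoid.radical_ne_zero (a := f)) ?_
    (radBound_prod_irreducible habc _ _ hirr rfl)
  exact hf.isRadical.dvd_radical hf.ne_zero

/-! ### Dehomogenization -/

/-- Gauss's lemma, for squarefreeness. Constant square factors of `f` are allowed, and disappear
over `ℚ`. -/
lemma squarefree_map_of_forall {f : ℤ[X]} (hf : f ≠ 0)
    (h : ∀ g : ℤ[X], g * g ∣ f → g.natDegree = 0) :
    Squarefree (f.map (Int.castRingHom ℚ)) := by
  have hinj : Function.Injective (Int.castRingHom ℚ) := Int.cast_injective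
  intro q hqq
  have hf' : f.map (Int.castRingHom ℚ) ≠ 0 := (Polynomial.map_ne_zero_iff hinj).mpr hf
  have hq0 : q ≠ 0 := by
    rintro rfl
    rw [zero_mul, zero_dvd_iff] at hqq
    exact hf' hqq
  obtain ⟨b, hb, hbq⟩ := IsLocalization.integerNormalization_spec (nonZeroDivisors ℤ) q
  set n := IsLocalization.integerNormalization (nonZeroDivisors ℤ) q with hn
  have hb0 : (b : ℚ) ≠ 0 := by exact_mod_cast nonZeroDivisors.ne_zero hb
  have hbq' : n.map (Int.castRingHom ℚ) = C (b : ℚ) * q := by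
    rw [← Int.cast_smul_eq_zsmul ℚ, smul_eq_C_mul] at hbq
    exact hbq
  have hn0 : n ≠ 0 := by
    intro h0
    rw [h0, Polynomial.map_zero] at hbq'
    exact mul_ne_zero (C_ne_zero.mpr hb0) hq0 hbq'.symm
  have hc : ((n.content : ℤ) : ℚ) ≠ 0 := by
    exact_mod_cast mt content_eq_zero_iff.mp hn0
  have hass : Associated (n.primPart.map (Int.castRingHom ℚ)) q := by
    have h1 : Associated (n.primPart.map (Int.castRingHom ℚ)) (n.map (Int.castRingHom ℚ)) := by
      conv_rhs => rw [n.eq_C_content_mul_primPart, Polynomial.map_mul, map_C, mul_comm]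
      exact associated_mul_unit_right _ _ (isUnit_C.mpr hc.isUnit)
    refine h1.trans ?_
    rw [hbq', mul_comm]
    exact (associated_mul_unit_right _ _ (isUnit_C.mpr hb0.isUnit)).symm
  have hdvd : n.primPart * n.primPart ∣ f := by
    rw [IsPrimitive.Int.dvd_iff_map_cast_dvd_map_cast _ _
      (n.isPrimitive_primPart.mul n.isPrimitive_primPart), Polynomial.map_mul]
    exact (hass.mul_mul hass).dvd.trans hqq
  have hdeg := h _ hdvd
  rw [isUnit_iff_degree_eq_zero, degree_eq_natDegree hq0, ← natDegree_eq_of_degree_eq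
    (degree_eq_degree_of_associated hass), natDegree_map_eq_of_injective hinj, hdeg]
  rfl

lemma natDegree_dehomogenize_le {F : MvPolynomial (Fin 2) ℤ} {r : ℕ} (hhom : F.IsHomogeneous r) :
    (MvPolynomial.aeval ![(X : ℤ[X]), 1] F).natDegree ≤ r := by
  rw [MvPolynomial.aeval_def, MvPolynomial.eval₂_eq']
  refine natDegree_sum_le_of_forall_le _ _ fun d hd => ?_
  have hdr := hhom.degree_eq_sum_deg_support hd
  rw [← Finsupp.degree_apply, Finsupp.degree_eq_sum, Fin.sum_univ_two] at hdr
  simp only [Fin.prod_univ_two, Matrix.cons_val_zero, Matrix.cons_val_one, one_pow, mul_one,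
    algebraMap_eq]
  exact (natDegree_C_mul_X_pow_le _ _).trans (by omega)

lemma natDegree_eq_zero_of_mul_self_dvd {F : MvPolynomial (Fin 2) ℤ} {r : ℕ} {f g : ℤ[X]}
    (hf : f ≠ 0) (hfr : f.natDegree ≤ r) (hF : f.homogenize r = F) (hsq : Squarefree F)
    (hg : g * g ∣ f) : g.natDegree = 0 := by
  obtain ⟨e, rfl⟩ := hg
  have hg0 : g ≠ 0 := by
    rintro rfl
    simp at hf
  have he0 : e ≠ 0 := right_ne_zero_of_mul hf
  rw [natDegree_mul (mul_ne_zero hg0 hg0) he0, natDegree_mul hg0 hg0] at hfr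
  obtain ⟨k, rfl⟩ := Nat.exists_eq_add_of_le hfr
  have h1 : IsUnit (g.homogenize g.natDegree) := by
    apply hsq
    rw [← hF, add_assoc, homogenize_mul _ _ (natDegree_mul_le) (Nat.le_add_right _ _),
      homogenize_mul _ _ le_rfl le_rfl]
    exact dvd_mul_right _ _
  have h2 := h1.map (MvPolynomial.aeval ![(X : ℤ[X]), 1])
  rw [aeval_homogenize_X_one _ le_rfl] at h2
  exact natDegree_eq_zero_of_isUnit h2

/-- A squarefree form is divisible at most once by the second variable. -/
lemma le_natDegree_add_one {F : MvPolynomial (Fin 2) ℤ} {r : ℕ} {f : ℤ[X]}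
    (hF : f.homogenize r = F) (hsq : Squarefree F) : r ≤ f.natDegree + 1 := by
  by_contra! hlt
  obtain ⟨k, rfl⟩ := Nat.exists_eq_add_of_le hlt
  have h1 : IsUnit (MvPolynomial.X 1 : MvPolynomial (Fin 2) ℤ) := by
    apply hsq
    have e : f.natDegree + 1 + 1 + k = (2 + k) + f.natDegree := by ring
    rw [← hF, e]
    conv_rhs => rw [← one_mul f]
    rw [homogenize_mul _ _ (by simp) (by simp), homogenize_one, pow_add, pow_two, mul_assoc]
    exact dvd_mul_right _ _
  have h2 := h1.map (MvPolynomial.eval (0 : Fin 2 → ℤ))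
  simp at h2

/-! ### Values of binary forms -/

lemma abs_eval_form_le {F : MvPolynomial (Fin 2) ℤ} {r : ℕ} (hhom : F.IsHomogeneous r)
    (u v : ℤ) :
    |MvPolynomial.eval ![u, v] F| ≤ (∑ d ∈ F.support, |F.coeff d|) * max |u| |v| ^ r := by
  rw [MvPolynomial.eval_eq', Finset.sum_mul]
  refine (Finset.abs_sum_le_sum_abs _ _).trans (Finset.sum_le_sum fun d hd => ?_)
  have hdr := hhom.degree_eq_sum_deg_support hd
  rw [← Finsupp.degree_apply, Finsupp.degree_eq_sum, Fin.sum_univ_two] at hdr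
  rw [abs_mul, hdr, pow_add, Fin.prod_univ_two, abs_mul, abs_pow, abs_pow]
  simp only [Matrix.cons_val_zero, Matrix.cons_val_one]
  gcongr
  exacts [le_max_left _ _, le_max_right _ _]

/-- Coprime homogeneous coordinates of a rational point are, up to a common sign, its numerator
and denominator. -/
lemma num_den_div_of_isCoprime {u v : ℤ} (huv : IsCoprime u v) (hv : v ≠ 0) :
    ((u : ℚ) / v).num.natAbs = u.natAbs ∧ ((u : ℚ) / v).den = v.natAbs := by
  have hco : Nat.Coprime u.natAbs v.natAbs := Int.isCoprime_iff_gcd_eq_one.mp huv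
  rcases hv.lt_or_gt with h | h
  · have e : (u : ℚ) / v = ((-u : ℤ) : ℚ) / ((-v : ℤ) : ℚ) := by
      push_cast
      rw [neg_div_neg_eq]
    have hco' : Nat.Coprime (-u).natAbs (-v).natAbs := by simpa using hco
    rw [e]
    have h1 := Rat.num_div_eq_of_coprime (by omega : 0 < -v) hco'
    have h2 := Rat.den_div_eq_of_coprime (by omega : 0 < -v) hco'
    omega
  · have h1 := Rat.num_div_eq_of_coprime h hco
    have h2 := Rat.den_div_eq_of_coprime h hco
    omega

lemma cast_eval_homogenize {f : ℤ[X]} {n : ℕ} (hn : f.natDegree ≤ n) {u v : ℤ} (hv : v ≠ 0) :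
    ((MvPolynomial.eval ![u, v] (f.homogenize n) : ℤ) : ℚ) =
      (f.map (Int.castRingHom ℚ)).eval ((u : ℚ) / v) * (v : ℚ) ^ n := by
  have h1 := eval_homogenize (p := f.map (Int.castRingHom ℚ)) (n := n)
    (natDegree_map_le.trans hn) ![(u : ℚ), v] (by simpa using hv)
  simp only [Matrix.cons_val_zero, Matrix.cons_val_one] at h1
  rw [← h1, homogenize_map, MvPolynomial.eval_map, ← eq_intCast (Int.castRingHom ℚ),
    MvPolynomial.eval, MvPolynomial.coe_eval₂Hom, MvPolynomial.hom_eval₂, RingHom.comp_id]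
  congr 1
  funext i
  fin_cases i <;> simp

/-- The radical of a nonzero value `F (u, v)` of a squarefree form of degree `r` is at least a
constant times `H ^ (r - 2 - ε)`, where `H = max (|u|, |v|)`. With `f = F (X, 1)`, either
`deg f = r`, and the point at infinity is not a zero of `F`, which costs a factor `|v| ≤ H` in the
radical; or `deg f = r - 1`, and the primes dividing `v` also divide `F (u, v)`. -/
lemma exists_radNat_form_ge (habc : ABCConjecture) {F : MvPolynomial (Fin 2) ℤ} {r : ℕ}
    (hF : F ≠ 0) (hhom : F.IsHomogeneous r) (hsq : Squarefree F) {ε : ℝ} (hε : 0 < ε) :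
    ∃ c : ℝ, 0 < c ∧ ∀ u v : ℤ, IsCoprime u v → MvPolynomial.eval ![u, v] F ≠ 0 →
      ((max |u| |v| : ℤ) : ℝ) ^ r ≤
        c * radNat (MvPolynomial.eval ![u, v] F).natAbs * ((max |u| |v| : ℤ) : ℝ) ^ (2 + ε) := by
  set f := MvPolynomial.aeval ![(X : ℤ[X]), 1] F with hf
  have hfF : f.homogenize r = F := homogenize_eq_of_isHomogeneous hhom rfl
  have hfr : f.natDegree ≤ r := natDegree_dehomogenize_le hhom
  have hf0 : f ≠ 0 := by
    rintro h0
    rw [h0, homogenize_zero] at hfF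
    exact hF hfF.symm
  have hsqf : Squarefree (f.map (Int.castRingHom ℚ)) :=
    squarefree_map_of_forall hf0 fun g hg =>
      natDegree_eq_zero_of_mul_self_dvd hf0 hfr hfF hsq hg
  have hrf : r ≤ f.natDegree + 1 := le_natDegree_add_one hfF hsq
  have hdeg : (f.map (Int.castRingHom ℚ)).natDegree = f.natDegree :=
    natDegree_map_eq_of_injective Int.cast_injective f
  obtain ⟨c, hc, hbound⟩ := habc.radBound_of_squarefree hsqf ε hε
  refine ⟨c + 1, by positivity, fun u v huv hs => ?_⟩
  set s := MvPolynomial.eval ![u, v] F with hs_def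
  have hrad : (1 : ℝ) ≤ radNat s.natAbs := by exact_mod_cast radNat_pos _
  -- at the point at infinity the height is one
  by_cases hv : v = 0
  · have hu : |u| = 1 := by
      rw [hv, isCoprime_zero_right] at huv
      exact Int.isUnit_iff_abs_eq.mp huv
    rw [hv, hu, abs_zero]
    norm_num
    nlinarith
  obtain ⟨hnum, hden⟩ := num_den_div_of_isCoprime huv hv
  set t : ℚ := (u : ℚ) / v with ht
  have hH : ((max |u| |v| : ℤ) : ℝ) = ratHeight t := by
    rw [ratHeight, hnum, hden]
    push_cast
    simp [Nat.cast_natAbs]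
  have hsv : (s : ℚ) = (f.map (Int.castRingHom ℚ)).eval t * (v : ℚ) ^ r := by
    rw [← cast_eval_homogenize hfr hv, hfF]
  set w := MvPolynomial.eval ![u, v] (f.homogenize f.natDegree) with hw_def
  have hwv : (w : ℚ) = (f.map (Int.castRingHom ℚ)).eval t * (v : ℚ) ^ f.natDegree :=
    cast_eval_homogenize le_rfl hv
  have hsw : s = w * v ^ (r - f.natDegree) := by
    have : (s : ℚ) = w * (v : ℚ) ^ (r - f.natDegree) := by
      rw [hsv, hwv, mul_assoc, ← pow_add, Nat.add_sub_cancel' hfr]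
    exact_mod_cast this
  set y := (f.map (Int.castRingHom ℚ)).eval t with hy
  have hy0 : y ≠ 0 := by
    intro h0
    rw [h0, zero_mul] at hsv
    exact hs (by exact_mod_cast hsv)
  have hyw : y.num.natAbs ∣ w.natAbs := by
    rw [Int.natAbs_dvd_natAbs]
    have h1 : w * y.den = y.num * v ^ f.natDegree := by
      have : (w : ℚ) * y.den = y.num * (v : ℚ) ^ f.natDegree := by
        rw [hwv, ← Rat.mul_den_eq_num y]
        ring
      exact_mod_cast this
    have hco : IsCoprime y.num (y.den : ℤ) := Int.isCoprime_iff_gcd_eq_one.mpr y.reduced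
    exact hco.dvd_of_dvd_mul_right (h1 ▸ dvd_mul_right _ _)
  have hws : w.natAbs ∣ s.natAbs := by
    rw [Int.natAbs_dvd_natAbs, hsw]
    exact dvd_mul_right _ _
  have hH1 := one_le_ratHeight_real t
  have hkey : (suppRad (f.map (Int.castRingHom ℚ)) t : ℝ) * (ratHeight t : ℝ) ^ (r - f.natDegree)
      ≤ ratHeight t * radNat s.natAbs := by
    rcases hfr.eq_or_lt with h | h
    · have h1 : suppRad (f.map (Int.castRingHom ℚ)) t ≤ t.den * radNat s.natAbs := by
        refine radNat_le_mul t.den_pos.ne' (Int.natAbs_ne_zero.mpr hs) fun p hp hpd => ?_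
        rcases hp.dvd_mul.mp hpd with h2 | h2
        · exact ((h2.trans hyw).trans hws).mul_left _
        · exact h2.mul_right _
      have h2 : (t.den : ℝ) ≤ ratHeight t := by exact_mod_cast le_max_right _ _
      rw [h, Nat.sub_self, pow_zero, mul_one]
      calc (suppRad (f.map (Int.castRingHom ℚ)) t : ℝ) ≤ t.den * radNat s.natAbs := by
            exact_mod_cast h1
        _ ≤ _ := by gcongr
    · have hr1 : r - f.natDegree = 1 := by omega
      have hvs : v.natAbs ∣ s.natAbs := by
        rw [Int.natAbs_dvd_natAbs, hsw, hr1, pow_one]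
        exact dvd_mul_left _ _
      have h1 : suppRad (f.map (Int.castRingHom ℚ)) t ≤ 1 * radNat s.natAbs := by
        refine radNat_le_mul one_ne_zero (Int.natAbs_ne_zero.mpr hs) fun p hp hpd => ?_
        rw [one_mul]
        rcases hp.dvd_mul.mp hpd with h2 | h2
        · exact (h2.trans hyw).trans hws
        · exact (hden ▸ h2).trans hvs
      rw [one_mul] at h1
      rw [hr1, pow_one, mul_comm]
      gcongr
  have hb := hbound t hy0
  rw [hdeg] at hb
  rw [hH]
  have hHpos : (0 : ℝ) < ratHeight t := by linarith
  have hHε : (0 : ℝ) < (ratHeight t : ℝ) ^ ε := Real.rpow_pos_of_pos hHpos ε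
  calc (ratHeight t : ℝ) ^ r ≤ (ratHeight t : ℝ) ^ (1 + (f.natDegree - 1) + (r - f.natDegree)) :=
        pow_le_pow_right₀ hH1 (by omega)
    _ = ratHeight t * (ratHeight t : ℝ) ^ (f.natDegree - 1) *
          (ratHeight t : ℝ) ^ (r - f.natDegree) := by rw [pow_add, pow_add, pow_one]
    _ ≤ ratHeight t * (c * suppRad (f.map (Int.castRingHom ℚ)) t * (ratHeight t : ℝ) ^ ε) *
          (ratHeight t : ℝ) ^ (r - f.natDegree) := by gcongr
    _ = c * ratHeight t * (ratHeight t : ℝ) ^ ε *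
          (suppRad (f.map (Int.castRingHom ℚ)) t * (ratHeight t : ℝ) ^ (r - f.natDegree)) := by
        ring
    _ ≤ c * ratHeight t * (ratHeight t : ℝ) ^ ε * (ratHeight t * radNat s.natAbs) := by gcongr
    _ = c * radNat s.natAbs * (ratHeight t : ℝ) ^ (2 + ε) := by
        rw [Real.rpow_add hHpos, Real.rpow_two]
        ring
    _ ≤ (c + 1) * radNat s.natAbs * (ratHeight t : ℝ) ^ (2 + ε) := by
        gcongr
        linarith

/-- Each prime whose `q`-th power divides `n` occurs at most once in `radNat n`, which leaves
`q - 1` further factors in `n`. -/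
lemma prod_pow_mul_radNat_le {n q : ℕ} (hn : n ≠ 0) (hq : 1 ≤ q) :
    (∏ p ∈ n.primeFactors with p ^ q ∣ n, p) ^ (q - 1) * radNat n ≤ n := by
  rw [Finset.prod_filter, ← Finset.prod_pow, radNat, ← Finset.prod_mul_distrib]
  conv_rhs => rw [← Nat.prod_factorization_pow_eq_self hn]
  rw [Finsupp.prod, Nat.support_factorization]
  refine Finset.prod_le_prod' fun p hp => ?_
  have hp' := Nat.prime_of_mem_primeFactors hp
  split_ifs with h
  · rw [← pow_succ, Nat.sub_add_cancel hq]
    exact Nat.pow_le_pow_right hp'.pos ((hp'.pow_dvd_iff_le_factorization hn).mp h)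
  · rw [one_pow, one_mul]
    exact Nat.le_self_pow (hp'.factorization_pos_of_dvd hn (Nat.dvd_of_mem_primeFactors hp)).ne' p

end

theorem stmt13 (habc : ABCConjecture) (F : MvPolynomial (Fin 2) ℤ) (r q : ℕ)
    (hq : 2 ≤ q) (hF : F ≠ 0) (hhom : F.IsHomogeneous r) (hsq : Squarefree F) :
    ∀ ε : ℝ, 0 < ε → ∃ c : ℝ, 0 < c ∧
      ∀ u v : ℤ, IsCoprime u v → MvPolynomial.eval ![u, v] F ≠ 0 →
        ((∏ p ∈ Finset.filter (fun p => p ^ q ∣ (MvPolynomial.eval ![u, v] F).natAbs)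
              (MvPolynomial.eval ![u, v] F).natAbs.primeFactors, p : ℕ) : ℝ) ≤
          c * ((max |u| |v| : ℤ) : ℝ) ^ ((2 + ε) / ((q : ℝ) - 1)) := by
  intro ε hε
  obtain ⟨c, hc, hbound⟩ := exists_radNat_form_ge habc hF hhom hsq hε
  set A : ℤ := ∑ d ∈ F.support, |F.coeff d| with hA
  have hA0 : 0 < A := by
    obtain ⟨d, hd⟩ := MvPolynomial.support_nonempty.mpr hF
    exact (abs_pos.mpr (MvPolynomial.mem_support_iff.mp hd)).trans_le
      (Finset.single_le_sum (f := fun d => |F.coeff d|) (fun _ _ => abs_nonneg _) hd)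
  have hA0' : (0 : ℝ) < A := by exact_mod_cast hA0
  refine ⟨((A : ℝ) * c) ^ (1 / ((q : ℝ) - 1)), by positivity, fun u v huv hs => ?_⟩
  have hb := hbound u v huv hs
  have hle := abs_eval_form_le hhom u v
  set s := MvPolynomial.eval ![u, v] F with hs_def
  set P : ℕ := ∏ p ∈ s.natAbs.primeFactors with p ^ q ∣ s.natAbs, p with hP
  set H : ℤ := max |u| |v| with hH
  have hH0 : (0 : ℝ) ≤ H := by exact_mod_cast (abs_nonneg u).trans (le_max_left _ _)
  have hPs : P ^ (q - 1) * radNat s.natAbs ≤ s.natAbs :=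
    prod_pow_mul_radNat_le (Int.natAbs_ne_zero.mpr hs) (by omega)
  have hrad : (0 : ℝ) < radNat s.natAbs := by exact_mod_cast radNat_pos _
  have hle' : (s.natAbs : ℝ) ≤ A * (H : ℝ) ^ r := by
    rw [Nat.cast_natAbs]
    exact_mod_cast hle
  have h1 : (P : ℝ) ^ (q - 1) ≤ A * c * (H : ℝ) ^ (2 + ε) := by
    refine le_of_mul_le_mul_right ?_ hrad
    calc (P : ℝ) ^ (q - 1) * radNat s.natAbs ≤ s.natAbs := by exact_mod_cast hPs
      _ ≤ A * (H : ℝ) ^ r := hle'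
      _ ≤ A * (c * radNat s.natAbs * (H : ℝ) ^ (2 + ε)) := by gcongr
      _ = A * c * (H : ℝ) ^ (2 + ε) * radNat s.natAbs := by ring
  have hq1 : (((q - 1 : ℕ) : ℝ)) = (q : ℝ) - 1 := by
    rw [Nat.cast_sub (by omega), Nat.cast_one]
  calc (P : ℝ) = ((P : ℝ) ^ (q - 1)) ^ (1 / ((q : ℝ) - 1)) := by
        rw [← hq1, one_div, Real.pow_rpow_inv_natCast (Nat.cast_nonneg _) (by omega)]
    _ ≤ (A * c * (H : ℝ) ^ (2 + ε)) ^ (1 / ((q : ℝ) - 1)) := by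
        refine Real.rpow_le_rpow (by positivity) h1 ?_
        rw [← hq1]
        positivity
    _ = ((A : ℝ) * c) ^ (1 / ((q : ℝ) - 1)) * (H : ℝ) ^ ((2 + ε) / ((q : ℝ) - 1)) := by
        rw [Real.mul_rpow (by positivity) (by positivity), ← Real.rpow_mul hH0, mul_one_div]
end

section
/- Assume the abc-conjecture. Let F(U,V) ∈ ℤ[U,V] be a nonzero homogeneous polynomial of degree r without repeated irreducible factors (i.e., squarefree), and let q ≥ 2 be an integer. Then for every ε > 0 there exists a constant c > 0, depending only on F, q and ε, such that for all coprime integers u, v with F(u,v) ≠ 0, the product of the distinct primes p whose exact multiplicity m = v_p(F(u,v)) in F(u,v) satisfies 1 ≤ m ≤ q−1 is at least c · max(|u|,|v|)^{r − 2 − 2/(q−1) − ε}. -/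
open Polynomial

/-! ### Belyi polynomials -/

/-- The critical values of `p` are roots of a nonzero rational polynomial of degree below `deg p`:
take the characteristic polynomial of multiplication by `p` on `ℚ[X]/(p')`. -/
lemma exists_criticalValue_polynomial (p : ℚ[X]) (hp : 0 < p.natDegree) :
    ∃ q : ℚ[X], q ≠ 0 ∧ q.natDegree < p.natDegree ∧ derivative p ∣ q.comp p := by
  have hd : derivative p ≠ 0 := by
    rw [Ne, derivative_eq_zero]
    exact hp.ne'
  let A := AdjoinRoot (derivative p)
  let pb := AdjoinRoot.powerBasis hd
  have : Module.Finite ℚ A := pb.finite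
  have : Module.Free ℚ A := Module.Free.of_basis pb.basis
  let x : A := AdjoinRoot.mk (derivative p) p
  let φ : A →ₗ[ℚ] A := Algebra.lmul ℚ A x
  refine ⟨φ.charpoly, φ.charpoly_monic.ne_zero, ?_, ?_⟩
  · rw [LinearMap.charpoly_natDegree, pb.finrank, AdjoinRoot.powerBasis_dim]
    exact natDegree_derivative_lt hp.ne'
  · rw [← AdjoinRoot.mk_eq_zero]
    have h1 : aeval φ φ.charpoly = 0 := φ.aeval_self_charpoly
    have h2 : aeval φ φ.charpoly = Algebra.lmul ℚ A (aeval x φ.charpoly) :=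
      (aeval_algHom_apply (Algebra.lmul ℚ A) x φ.charpoly)
    have h3 : aeval x φ.charpoly = 0 := by
      have h4 := congrArg (fun l : Module.End ℚ A => l 1) (h2.symm.trans h1)
      simpa using h4
    have h5 : AdjoinRoot.mk (derivative p) (φ.charpoly.comp p) = aeval x φ.charpoly := by
      rw [comp, hom_eval₂]
      rfl
    rw [h5, h3]

/-- Some nonconstant rational polynomial takes rational values at all roots of `p` and at all its own
critical points. In the induction step `g` is composed with `p`, where `g` serves the polynomial of
critical values of `p`. -/
lemma exists_rational_values (n : ℕ) : ∀ p : ℚ[X], p ≠ 0 → p.natDegree ≤ n →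
    ∃ g : ℚ[X], 0 < g.natDegree ∧
      ∀ α : ℂ, (aeval α p = 0 ∨ aeval α (derivative g) = 0) → ∃ t : ℚ, aeval α g = (t : ℂ) := by
  induction n with
  | zero =>
    intro p hp hn
    refine ⟨X, by simp, ?_⟩
    rintro α (h | h)
    · rw [eq_C_of_natDegree_eq_zero (Nat.le_zero.mp hn)] at h hp
      simp at h
      simp [h] at hp
    · simp at h
  | succ n ih =>
    intro p hp hn
    rcases Nat.eq_zero_or_pos p.natDegree with h0 | h0
    · exact ih p hp (by omega)
    obtain ⟨q, hq0, hqd, hq⟩ := exists_criticalValue_polynomial p h0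
    obtain ⟨g, hg, hgv⟩ := ih q hq0 (by omega)
    refine ⟨g.comp p, by rw [natDegree_comp]; positivity, ?_⟩
    have key : ∀ α : ℂ, aeval α (g.comp p) = aeval (aeval α p) g := fun α => aeval_comp α
    rintro α (h | h)
    · refine ⟨g.eval 0, ?_⟩
      rw [key, h]
      simpa using (aeval_algebraMap_apply ℂ (0 : ℚ) g)
    · rw [derivative_comp, map_mul, mul_eq_zero] at h
      rw [key]
      apply hgv
      rcases h with h | h
      · left
        obtain ⟨s, hs⟩ := hq
        have := congrArg (aeval α) hs
        rwa [aeval_comp, map_mul, h, zero_mul] at this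
      · right; rwa [aeval_comp] at h

/-- The map `const · (x - a)^m (x - c)^n` with `m (c - b) = n (b - a)`: it identifies `a` and `c`, and
its critical points lie in `{a, b, c}`. -/
lemma exists_belyi_step (a b c : ℚ) (hab : a < b) (hbc : b < c) :
    ∃ h : ℚ[X], 0 < h.natDegree ∧ h.eval a = 0 ∧ h.eval b = 1 ∧ h.eval c = 0 ∧
      ∀ α : ℂ, aeval α (derivative h) = 0 → aeval α h = 0 ∨ aeval α h = 1 := by
  -- positive exponents with `m (c - b) = n (b - a)`
  obtain ⟨m, n, hm, hn, hmn⟩ : ∃ m n : ℕ, 0 < m ∧ 0 < n ∧ (m : ℚ) * (c - b) = n * (b - a) := by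
    have hpos : 0 < (b - a) / (c - b) := div_pos (by linarith) (by linarith)
    refine ⟨((b - a) / (c - b)).num.natAbs, ((b - a) / (c - b)).den, ?_, Rat.den_pos _, ?_⟩
    · exact Int.natAbs_pos.mpr (Rat.num_pos.mpr hpos).ne'
    · have h1 := Rat.num_div_den ((b - a) / (c - b))
      have h2 : ((((b - a) / (c - b)).num.natAbs : ℕ) : ℚ) = (((b - a) / (c - b)).num : ℚ) := by
        rw [← Int.cast_natCast, Int.natAbs_of_nonneg (Rat.num_pos.mpr hpos).le]
      rw [h2]
      have h3 : ((((b - a) / (c - b)).den : ℕ) : ℚ) ≠ 0 := by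
        exact_mod_cast ((b - a) / (c - b)).den_nz
      have h4 : c - b ≠ 0 := by linarith
      rw [div_eq_div_iff h3 h4] at h1
      linarith
  obtain ⟨m, rfl⟩ : ∃ k, m = k + 1 := ⟨m - 1, by omega⟩
  obtain ⟨n, rfl⟩ : ∃ k, n = k + 1 := ⟨n - 1, by omega⟩
  set e : ℚ := (b - a) ^ (m + 1) * (b - c) ^ (n + 1) with he
  have he0 : e ≠ 0 := mul_ne_zero (pow_ne_zero _ (by linarith)) (pow_ne_zero _ (by linarith))
  refine ⟨C e⁻¹ * ((X - C a) ^ (m + 1) * (X - C c) ^ (n + 1)), ?_, by simp, ?_, by simp, ?_⟩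
  · rw [natDegree_C_mul (inv_ne_zero he0), natDegree_mul (pow_ne_zero _ (X_sub_C_ne_zero _))
      (pow_ne_zero _ (X_sub_C_ne_zero _))]
    simp
  · simp only [eval_mul, eval_C, eval_pow, eval_sub, eval_X]
    exact inv_mul_cancel₀ he0
  · intro α hα
    simp only [map_mul, map_pow, map_sub, aeval_X, aeval_C, derivative_mul, derivative_C,
      derivative_pow, derivative_X, map_add, map_natCast, map_one,
      zero_mul, zero_add, sub_zero, mul_one, eq_ratCast, Nat.cast_add, Nat.cast_one,
      add_tsub_cancel_right] at hα ⊢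
    have hE : ((e⁻¹ : ℚ) : ℂ) ≠ 0 := by exact_mod_cast inv_ne_zero he0
    have h1 : (α - a) ^ m * (α - c) ^ n * (((m : ℂ) + 1) * (α - c) + ((n : ℂ) + 1) * (α - a)) = 0 := by
      have := (mul_eq_zero.mp hα).resolve_left hE
      linear_combination this
    rcases mul_eq_zero.mp h1 with h2 | h2
    · left
      rcases mul_eq_zero.mp h2 with h3 | h3
      · rw [pow_succ, h3]; simp
      · rw [pow_succ (α - (c : ℂ)), h3]; simp
    · right
      have hmn' : ((m : ℂ) + 1) * (c - b) = (n + 1) * (b - a) := by exact_mod_cast hmn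
      have hs : ((m : ℂ) + 1 + (n + 1)) ≠ 0 := by exact_mod_cast (by omega : m + 1 + (n + 1) ≠ 0)
      have hb : α = b := by
        apply mul_left_cancel₀ hs
        linear_combination h2 + hmn'
      rw [hb]
      have : ((e⁻¹ * e : ℚ) : ℂ) = 1 := by rw [inv_mul_cancel₀ he0]; simp
      rw [← this, he]
      push_cast
      ring

/-- Belyi's theorem for a finite set of rational points. Each composition with a map of
`exists_belyi_step` lowers the number of points. -/
lemma exists_belyi_of_rational (n : ℕ) : ∀ T : Finset ℚ, T.card ≤ n →
    ∃ f : ℚ[X], 0 < f.natDegree ∧ (∀ t ∈ T, f.eval t = 0 ∨ f.eval t = 1) ∧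
      ∀ α : ℂ, aeval α (derivative f) = 0 → aeval α f = 0 ∨ aeval α f = 1 := by
  induction n with
  | zero =>
    intro T hT
    have : T = ∅ := by simpa using hT
    subst this
    exact ⟨X, by simp, by simp, by simp⟩
  | succ n ih =>
    intro T hT
    by_cases h3 : ∃ a ∈ T, ∃ b ∈ T, ∃ c ∈ T, a < b ∧ b < c
    · obtain ⟨a, ha, b, hb, c, hc, hab, hbc⟩ := h3
      obtain ⟨h, hdeg, h_a, h_b, h_c, hcrit⟩ := exists_belyi_step a b c hab hbc
      obtain ⟨f, hf, hfT, hfc⟩ := ih (T.image h.eval) (by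
        have : (T.image h.eval).card < T.card := by
          refine lt_of_le_of_ne Finset.card_image_le fun heq => ?_
          have := Finset.card_image_iff.mp heq ha hc (h_a.trans h_c.symm)
          linarith
        omega)
      have h0 := hfT _ (Finset.mem_image_of_mem h.eval ha)
      have h1 := hfT _ (Finset.mem_image_of_mem h.eval hb)
      rw [h_a] at h0
      rw [h_b] at h1
      refine ⟨f.comp h, by rw [natDegree_comp]; positivity, ?_, ?_⟩
      · intro t ht
        rw [eval_comp]
        exact hfT _ (Finset.mem_image_of_mem _ ht)
      · intro α hα
        rw [derivative_comp, map_mul, mul_eq_zero, aeval_comp] at hα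
        rw [aeval_comp]
        rcases hα with hα | hα
        · have e0 : aeval (0 : ℂ) f = ((f.eval 0 : ℚ) : ℂ) := by
            simpa using (aeval_algebraMap_apply ℂ (0 : ℚ) f)
          have e1 : aeval (1 : ℂ) f = ((f.eval 1 : ℚ) : ℂ) := by
            simpa using (aeval_algebraMap_apply ℂ (1 : ℚ) f)
          rcases hcrit α hα with hv | hv
          · rw [hv, e0]; exact_mod_cast h0
          · rw [hv, e1]; exact_mod_cast h1
        · exact hfc _ hα
    · -- at most two points: an affine map does it
      rcases T.eq_empty_or_nonempty with rfl | hne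
      · exact ih ∅ (by simp)
      set a := T.min' hne
      set c := T.max' hne
      have hac : ∀ t ∈ T, t = a ∨ t = c := by
        intro t ht
        by_contra! hcon
        exact h3 ⟨a, T.min'_mem hne, t, ht, c, T.max'_mem hne,
          lt_of_le_of_ne (T.min'_le t ht) hcon.1.symm, lt_of_le_of_ne (T.le_max' t ht) hcon.2⟩
      by_cases hEq : a = c
      · refine ⟨X - C a, by simp, ?_, by simp⟩
        intro t ht
        left
        rcases hac t ht with h | h <;> simp [h, hEq]
      · have hne' : c - a ≠ 0 := sub_ne_zero.mpr (Ne.symm hEq)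
        have hi : (c - a)⁻¹ ≠ 0 := inv_ne_zero hne'
        refine ⟨C (c - a)⁻¹ * (X - C a), ?_, ?_, ?_⟩
        · rw [natDegree_C_mul hi]; simp
        · intro t ht
          rcases hac t ht with h | h
          · left; simp [h]
          · right; simp [h, hne']
        · intro α hα
          exfalso
          simp only [derivative_mul, derivative_C, derivative_sub, derivative_X, zero_mul, zero_add, sub_zero,
            mul_one, aeval_C] at hα
          exact hi ((map_eq_zero _).mp hα)

/-- Belyi's theorem for the projective line, in polynomial form. -/
theorem exists_belyi (p : ℚ[X]) (hp : p ≠ 0) :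
    ∃ f : ℚ[X], 0 < f.natDegree ∧
      ∀ α : ℂ, (aeval α p = 0 ∨ aeval α (derivative f) = 0) → aeval α f = 0 ∨ aeval α f = 1 := by
  obtain ⟨g, hg, hgv⟩ := exists_rational_values _ p hp le_rfl
  have hg' : derivative g ≠ 0 := fun h => hg.ne' (derivative_eq_zero.mp h)
  have hpg : p * derivative g ≠ 0 := mul_ne_zero hp hg'
  choose! τ hτ using hgv
  obtain ⟨f, hf, hfT, hfc⟩ := exists_belyi_of_rational _
    (((p * derivative g).aroots ℂ).toFinset.image τ) le_rfl
  refine ⟨f.comp g, by rw [natDegree_comp]; positivity, ?_⟩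
  have main : ∀ α : ℂ, (aeval α p = 0 ∨ aeval α (derivative g) = 0) →
      aeval (aeval α g) f = 0 ∨ aeval (aeval α g) f = 1 := by
    intro α hα
    have hmem : τ α ∈ ((p * derivative g).aroots ℂ).toFinset.image τ := by
      apply Finset.mem_image_of_mem
      rw [Multiset.mem_toFinset, mem_aroots]
      exact ⟨hpg, by rw [map_mul]; exact mul_eq_zero.mpr hα⟩
    have e : aeval ((τ α : ℚ) : ℂ) f = ((f.eval (τ α) : ℚ) : ℂ) := by
      simpa using (aeval_algebraMap_apply ℂ (τ α) f)
    rw [hτ α hα, e]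
    exact_mod_cast hfT _ hmem
  intro α hα
  rw [aeval_comp]
  rcases hα with hα | hα
  · exact main α (Or.inl hα)
  · rw [derivative_comp, map_mul, mul_eq_zero, aeval_comp] at hα
    rcases hα with hα | hα
    · exact main α (Or.inr hα)
    · exact hfc _ hα

/-! ### The radical of `f (f - 1)` -/

lemma rootMultiplicity_factor (f : ℂ[X]) (α : ℂ) (hα : f.eval α = 0 ∨ f.eval α = 1)
    (hP : f * (f - 1) ≠ 0) :
    (f * (f - 1)).rootMultiplicity α = (derivative f).rootMultiplicity α + 1 := by
  -- apply the derivative rule to whichever factor vanishes; the other one does not vanish at `α`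
  have key : ∀ g h : ℂ[X], g * h ≠ 0 → g.eval α = 0 → h.eval α ≠ 0 →
      (g * h).rootMultiplicity α = (derivative g).rootMultiplicity α + 1 := by
    intro g h hgh hg hh
    have hg0 : g ≠ 0 := left_ne_zero_of_mul hgh
    have h1 : 0 < g.rootMultiplicity α := (rootMultiplicity_pos hg0).mpr hg
    have h2 := derivative_rootMultiplicity_of_root (p := g) (t := α) hg
    rw [rootMultiplicity_mul hgh, rootMultiplicity_eq_zero hh]
    omega
  rcases hα with h | h
  · exact key f (f - 1) hP h (by simp [h])
  · have := key (f - 1) f (by rwa [mul_comm]) (by simp [h]) (by simp [h])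
    rw [mul_comm, this]
    simp

/-- A Belyi polynomial `f` for a squarefree `p`, together with the radical `p G`, of degree
`deg f + 1`, of `f (f - 1)`. -/
lemma exists_belyi_radical (p : ℚ[X]) (hp : Squarefree p) :
    ∃ (f G Q : ℚ[X]) (k : ℕ), 0 < f.natDegree ∧ G ≠ 0 ∧
      p.natDegree + G.natDegree = f.natDegree + 1 ∧ (p * G) ^ k = f * (f - 1) * Q := by
  obtain ⟨f, hf, hcrit⟩ := exists_belyi p hp.ne_zero
  have hf0 : f ≠ 0 := fun h => by simp [h] at hf
  have hf1d : (f - 1).natDegree = f.natDegree := by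
    simpa using natDegree_sub_C (p := f) (a := (1 : ℚ))
  have hf1 : f - 1 ≠ 0 := fun h => by rw [h] at hf1d; simp at hf1d; omega
  have hd : derivative f ≠ 0 := fun h => hf.ne' (derivative_eq_zero.mp h)
  set P := f * (f - 1) with hPdef
  have hP : P ≠ 0 := mul_ne_zero hf0 hf1
  let ι : ℚ →+* ℂ := algebraMap ℚ ℂ
  have hmap0 : ∀ {g : ℚ[X]}, g ≠ 0 → g.map ι ≠ 0 := fun h => (Polynomial.map_ne_zero_iff ι.injective).mpr h
  have hPι : P.map ι = f.map ι * (f.map ι - 1) := by simp [hPdef]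
  have hev : ∀ (g : ℚ[X]) (α : ℂ), (g.map ι).eval α = aeval α g := fun g α => by
    rw [eval_map_algebraMap]
  have hmult : ∀ α : ℂ, (aeval α f = 0 ∨ aeval α f = 1) →
      (P.map ι).rootMultiplicity α = ((derivative f).map ι).rootMultiplicity α + 1 := by
    intro α hα
    rw [hPι, ← derivative_map]
    refine rootMultiplicity_factor _ _ (by simpa only [hev] using hα) ?_
    rw [← hPι]; exact hmap0 hP
  -- `f'` divides `f (f - 1)`; the quotient `R` is the radical of `f (f - 1)`
  obtain ⟨R, hR⟩ : derivative f ∣ P := by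
    rw [← map_dvd_map' ι, IsAlgClosed.dvd_iff_roots_le_roots (hmap0 hd) (hmap0 hP),
      Multiset.le_iff_count]
    intro α
    rw [count_roots, count_roots]
    by_cases hα : aeval α (derivative f) = 0
    · rw [hmult α (hcrit α (Or.inr hα))]; omega
    · rw [rootMultiplicity_eq_zero]
      · omega
      · rwa [IsRoot, hev]
  have hR0 : R ≠ 0 := fun h => hP (by rw [hR, h, mul_zero])
  have hRmult : ∀ α : ℂ, (aeval α f = 0 ∨ aeval α f = 1) → (R.map ι).rootMultiplicity α = 1 := by
    intro α hα
    have h1 := hmult α hα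
    rw [hR, Polynomial.map_mul, rootMultiplicity_mul (mul_ne_zero (hmap0 hd) (hmap0 hR0))] at h1
    omega
  have hdeg : R.natDegree = f.natDegree + 1 := by
    have h1 : P.natDegree = (derivative f).natDegree + R.natDegree := by
      rw [hR, natDegree_mul hd hR0]
    rw [hPdef, natDegree_mul hf0 hf1, hf1d, natDegree_derivative] at h1
    omega
  obtain ⟨G, hG⟩ : p ∣ R := by
    rw [← map_dvd_map' ι, IsAlgClosed.dvd_iff_roots_le_roots (hmap0 hp.ne_zero) (hmap0 hR0),
      Multiset.le_iff_count]
    intro α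
    rw [count_roots, count_roots]
    by_cases hα : aeval α p = 0
    · rw [hRmult α (hcrit α (Or.inl hα)), ← count_roots]
      have hsep : (p.map ι).Separable := (PerfectField.separable_iff_squarefree.mpr hp).map
      exact Multiset.nodup_iff_count_le_one.mp (nodup_roots hsep) α
    · rw [rootMultiplicity_eq_zero]
      · omega
      · rwa [IsRoot, hev]
  have hG0 : G ≠ 0 := fun h => hR0 (by rw [hG, h, mul_zero])
  obtain ⟨Q, hQ⟩ : P ∣ R ^ P.natDegree := by
    rw [← map_dvd_map' ι, IsAlgClosed.dvd_iff_roots_le_roots (hmap0 hP)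
      (hmap0 (pow_ne_zero _ hR0)), Multiset.le_iff_count]
    intro α
    rw [Polynomial.map_pow, roots_pow, Multiset.count_nsmul, count_roots, count_roots]
    by_cases hα : aeval α f = 0 ∨ aeval α f = 1
    · rw [hRmult α hα, mul_one, ← natDegree_map ι (p := P), ← count_roots]
      exact (Multiset.count_le_card _ _).trans (card_roots' _)
    · rw [rootMultiplicity_eq_zero]
      · omega
      · rw [IsRoot, hPι]
        push Not at hα
        simp only [eval_mul, eval_sub, eval_one, hev, mul_eq_zero, sub_eq_zero]
        tauto
  refine ⟨f, G, Q, P.natDegree, hf, hG0, ?_, by rw [← hG, hQ]⟩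
  rw [← hdeg, hG, natDegree_mul hp.ne_zero hG0]


/-! ### Forms and their dehomogenization -/

/-- The value at `(u, v)` of the degree-`N` homogenization `∑ gᵢ Uⁱ V^(N-i)` of `g`. Terms of `g`
of degree above `N` are ignored. -/
def homEval (g : ℤ[X]) (N : ℕ) (u v : ℤ) : ℤ :=
  ∑ i ∈ Finset.range (N + 1), g.coeff i * u ^ i * v ^ (N - i)

lemma homEval_cast (g : ℤ[X]) {N : ℕ} (hN : g.natDegree ≤ N) (u v : ℤ) (hv : v ≠ 0) :
    (homEval g N u v : ℚ) = v ^ N * (g.map (Int.castRingHom ℚ)).eval ((u : ℚ) / v) := by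
  have hv' : (v : ℚ) ≠ 0 := by exact_mod_cast hv
  rw [eval_eq_sum_range' (lt_of_le_of_lt natDegree_map_le (Nat.lt_succ_of_le hN)), Finset.mul_sum,
    homEval]
  push_cast
  refine Finset.sum_congr rfl fun i hi => ?_
  have hi' : i ≤ N := Nat.lt_succ_iff.mp (Finset.mem_range.mp hi)
  rw [coeff_map, eq_intCast, div_pow, pow_sub₀ _ hv' hi']
  field_simp

lemma homEval_succ (g : ℤ[X]) (N : ℕ) (u v : ℤ) :
    homEval g (N + 1) u v = g.coeff (N + 1) * u ^ (N + 1) + v * homEval g N u v := by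
  rw [homEval, Finset.sum_range_succ, homEval, Finset.mul_sum, add_comm]
  congr 1
  · simp
  · refine Finset.sum_congr rfl fun i hi => ?_
    have hi' : i ≤ N := Nat.lt_succ_iff.mp (Finset.mem_range.mp hi)
    rw [Nat.succ_sub hi', pow_succ]
    ring

lemma abs_homEval_le (g : ℤ[X]) (N : ℕ) : ∃ S : ℤ, 0 < S ∧ ∀ u v : ℤ,
    |homEval g N u v| ≤ S * (max |u| |v|) ^ N := by
  refine ⟨∑ i ∈ Finset.range (N + 1), |g.coeff i| + 1, ?_, fun u v => ?_⟩
  · have := Finset.sum_nonneg (s := Finset.range (N + 1)) fun i _ => abs_nonneg (g.coeff i)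
    omega
  have hH : 0 ≤ max |u| |v| := le_max_of_le_left (abs_nonneg u)
  calc |homEval g N u v|
      ≤ ∑ i ∈ Finset.range (N + 1), |g.coeff i * u ^ i * v ^ (N - i)| :=
        Finset.abs_sum_le_sum_abs _ _
    _ ≤ ∑ i ∈ Finset.range (N + 1), |g.coeff i| * (max |u| |v|) ^ N := by
        refine Finset.sum_le_sum fun i hi => ?_
        have hi' : i ≤ N := Nat.lt_succ_iff.mp (Finset.mem_range.mp hi)
        rw [abs_mul, abs_mul, abs_pow, abs_pow, mul_assoc]
        refine mul_le_mul_of_nonneg_left ?_ (abs_nonneg _)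
        calc |u| ^ i * |v| ^ (N - i) ≤ (max |u| |v|) ^ i * (max |u| |v|) ^ (N - i) := by
              gcongr
              · exact le_max_left _ _
              · exact le_max_right _ _
          _ = (max |u| |v|) ^ N := by rw [← pow_add, Nat.add_sub_cancel' hi']
    _ ≤ _ := by
        rw [← Finset.sum_mul]
        gcongr
        omega

lemma exists_clear_denominators (g : ℚ[X]) : ∃ (e : ℕ) (g₀ : ℤ[X]), 0 < e ∧
    g₀.natDegree = g.natDegree ∧ g₀.map (Int.castRingHom ℚ) = C (e : ℚ) * g := by
  obtain ⟨b, hb, hbg⟩ := IsLocalization.integerNormalization_spec (nonZeroDivisors ℤ) g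
  set g₁ := IsLocalization.integerNormalization (nonZeroDivisors ℤ) g
  have hb0 : b ≠ 0 := nonZeroDivisors.ne_zero hb
  have key : (C b * g₁).map (Int.castRingHom ℚ) = C (((b ^ 2).natAbs : ℕ) : ℚ) * g := by
    have h1 : g₁.map (Int.castRingHom ℚ) = C (b : ℚ) * g := by
      have : algebraMap ℤ ℚ = Int.castRingHom ℚ := rfl
      rw [← this, hbg, ← smul_eq_C_mul, Int.cast_smul_eq_zsmul]
    have h2 : (((b ^ 2).natAbs : ℕ) : ℚ) = (b : ℚ) * b := by
      rw [Nat.cast_natAbs, abs_of_nonneg (sq_nonneg b)]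
      push_cast
      ring
    rw [Polynomial.map_mul, h1, h2, map_C, C_mul, eq_intCast, mul_assoc]
  refine ⟨(b ^ 2).natAbs, C b * g₁, Int.natAbs_pos.mpr (pow_ne_zero _ hb0), ?_, key⟩
  rw [← natDegree_map_eq_of_injective (f := Int.castRingHom ℚ) Int.cast_injective, key,
    natDegree_C_mul]
  exact_mod_cast ne_of_gt (Int.natAbs_pos.mpr (pow_ne_zero _ hb0))

/-- By Gauss's lemma a square factor over `ℚ` gives a primitive square factor over `ℤ`, which
homogenizes to a square factor of the form. -/
lemma squarefree_map_of_homogenize (p : ℤ[X]) (r : ℕ) (hp0 : p ≠ 0) (hr : p.natDegree ≤ r)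
    (hsq : Squarefree (p.homogenize r)) : Squarefree (p.map (Int.castRingHom ℚ)) := by
  intro g hg
  have hp0' : p.map (Int.castRingHom ℚ) ≠ 0 :=
    (Polynomial.map_ne_zero_iff (Int.castRingHom ℚ).injective_int).mpr hp0
  have hg0 : g ≠ 0 := by
    rintro rfl
    rw [zero_mul, zero_dvd_iff] at hg
    exact hp0' hg
  obtain ⟨e, g₁, he, -, hg₁⟩ := exists_clear_denominators g
  have hg₁0 : g₁ ≠ 0 := by
    rintro rfl
    rw [Polynomial.map_zero] at hg₁
    have he' : (e : ℚ) ≠ 0 := by exact_mod_cast he.ne'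
    exact mul_ne_zero (C_ne_zero.mpr he') hg0 hg₁.symm
  -- `g₂` is a primitive integral polynomial equal to `g` up to a nonzero rational factor
  set g₂ := g₁.primPart with hg₂
  have hprim : g₂.IsPrimitive := isPrimitive_primPart g₁
  have hassoc : Associated (g₂.map (Int.castRingHom ℚ)) g := by
    have hc : ((g₁.content : ℤ) : ℚ) ≠ 0 := by
      exact_mod_cast (mt content_eq_zero_iff.mp hg₁0)
    have he' : (e : ℚ) ≠ 0 := by exact_mod_cast he.ne'
    have h1 : C ((g₁.content : ℤ) : ℚ) * g₂.map (Int.castRingHom ℚ) = C (e : ℚ) * g := by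
      rw [← hg₁]
      conv_rhs => rw [g₁.eq_C_content_mul_primPart]
      simp [hg₂]
    have h2 : Associated (C ((g₁.content : ℤ) : ℚ) * g₂.map (Int.castRingHom ℚ))
        (g₂.map (Int.castRingHom ℚ)) :=
      associated_unit_mul_left _ _ (isUnit_C.mpr hc.isUnit)
    have h3 : Associated (C (e : ℚ) * g) g :=
      associated_unit_mul_left _ _ (isUnit_C.mpr he'.isUnit)
    exact h2.symm.trans (h1 ▸ h3)
  have hdvd : g₂ * g₂ ∣ p := by
    rw [IsPrimitive.Int.dvd_iff_map_cast_dvd_map_cast _ _ (hprim.mul hprim), Polynomial.map_mul]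
    exact ((hassoc.mul_mul hassoc).dvd_iff_dvd_left).mpr hg
  obtain ⟨h, hh⟩ := hdvd
  have hg₂0 : g₂ ≠ 0 := hprim.ne_zero
  have hh0 : h ≠ 0 := by
    rintro rfl
    exact hp0 (by simpa using hh)
  have hdeg : p.natDegree = g₂.natDegree + g₂.natDegree + h.natDegree := by
    rw [hh, natDegree_mul (mul_ne_zero hg₂0 hg₂0) hh0, natDegree_mul hg₂0 hg₂0]
  have hfac : p.homogenize r = g₂.homogenize g₂.natDegree * g₂.homogenize g₂.natDegree *
      h.homogenize (r - (g₂.natDegree + g₂.natDegree)) := by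
    rw [← homogenize_mul _ _ le_rfl le_rfl, ← homogenize_mul _ _
      (natDegree_mul_le) (by omega), ← hh]
    congr 1
    omega
  have hunit : IsUnit (g₂.homogenize g₂.natDegree) := hsq _ ⟨_, hfac⟩
  have hunit2 : IsUnit g₂ := by
    have := hunit.map (MvPolynomial.aeval ![(X : ℤ[X]), 1])
    rwa [aeval_homogenize_X_one _ le_rfl] at this
  exact hassoc.isUnit (hunit2.map (mapRingHom (Int.castRingHom ℚ)))

/-- The polynomial `F(X, 1)`. Its degree drops by at most one because `V ^ 2` does not divide `F`. -/
lemma exists_dehomogenization (F : MvPolynomial (Fin 2) ℤ) (r : ℕ) (hF : F ≠ 0)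
    (hhom : F.IsHomogeneous r) (hsq : Squarefree F) :
    ∃ p : ℤ[X], p.natDegree ≤ r ∧ r ≤ p.natDegree + 1 ∧
      Squarefree (p.map (Int.castRingHom ℚ)) ∧
      ∀ u v : ℤ, MvPolynomial.eval ![u, v] F = homEval p r u v := by
  set p : ℤ[X] := MvPolynomial.aeval ![(X : ℤ[X]), 1] F with hp
  have hFp : p.homogenize r = F := homogenize_eq_of_isHomogeneous hhom hp.symm
  have hp0 : p ≠ 0 := fun h => hF (by rw [← hFp, h, homogenize_zero])
  have hdeg : p.natDegree ≤ r := by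
    rw [hp, MvPolynomial.aeval_def, MvPolynomial.eval₂_eq']
    refine natDegree_sum_le_of_forall_le _ _ fun m hm => ?_
    have hm' : m 0 + m 1 = r := by
      have := hhom (MvPolynomial.mem_support_iff.mp hm)
      simpa [Finsupp.weight_apply, Finsupp.sum_fintype, Fin.sum_univ_two] using this
    refine (natDegree_C_mul_le _ _).trans ?_
    simp [Fin.prod_univ_two]
    omega
  refine ⟨p, hdeg, ?_, squarefree_map_of_homogenize p r hp0 hdeg (hFp.symm ▸ hsq), ?_⟩
  · by_contra! hlt
    have hfac : F = (1 : ℤ[X]).homogenize 1 * (1 : ℤ[X]).homogenize 1 * p.homogenize (r - 2) := by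
      rw [← homogenize_mul _ _ (by simp) (by simp),
        ← homogenize_mul _ _ (by simp) (by omega), one_mul, one_mul, ← hFp]
      congr 1
      omega
    have hu := hsq _ ⟨_, hfac⟩
    have := hu.map (MvPolynomial.eval ![(0 : ℤ), 0])
    simp at this
  · intro u v
    rw [← hFp, homogenize, homEval, MvPolynomial.eval_sum,
      Finset.Nat.sum_antidiagonal_eq_sum_range_succ_mk]
    refine Finset.sum_congr rfl fun i _ => ?_
    rw [MvPolynomial.eval_monomial, Finsupp.prod_fintype _ _ (by simp)]
    simp [Fin.prod_univ_two, mul_assoc]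

/-- The pair of forms `(g(U,V), V ^ D)` has no common zero, so it is bounded below by a multiple of
the `D`-th power of the height. -/
lemma exists_height_lower (g : ℤ[X]) {D : ℕ} (hD : 0 < D) (hg : g.coeff D ≠ 0) :
    ∃ κ : ℝ, 0 < κ ∧ ∀ u v : ℤ, κ * ((max |u| |v| : ℤ) : ℝ) ^ D ≤
      max (|(homEval g D u v : ℝ)|) (|(v : ℝ)| ^ D) := by
  obtain ⟨M, rfl⟩ : ∃ M, D = M + 1 := ⟨D - 1, by omega⟩
  obtain ⟨S, hS, hSb⟩ := abs_homEval_le g M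
  have hS' : (0 : ℝ) < S := by exact_mod_cast hS
  set k : ℝ := 1 / (2 * S) with hk
  have hk0 : 0 < k := by positivity
  refine ⟨min (k ^ (M + 1)) (1 / 2), by positivity, fun u v => ?_⟩
  set H : ℝ := ((max |u| |v| : ℤ) : ℝ) with hH
  have hHmax : H = max |(u : ℝ)| |(v : ℝ)| := by rw [hH]; push_cast; rfl
  have hH0 : 0 ≤ H := by rw [hHmax]; positivity
  by_cases hcase : k * H ≤ |(v : ℝ)|
  · -- `|v|` is comparable with the height
    refine le_max_of_le_right ?_
    calc min (k ^ (M + 1)) (1 / 2) * H ^ (M + 1) ≤ k ^ (M + 1) * H ^ (M + 1) := by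
          gcongr; exact min_le_left _ _
      _ = (k * H) ^ (M + 1) := by rw [mul_pow]
      _ ≤ _ := by gcongr
  · -- otherwise `|u|` is the height and the leading term dominates
    push Not at hcase
    refine le_max_of_le_left ?_
    have hb : |(homEval g M u v : ℝ)| ≤ S * H ^ M := by
      have := hSb u v
      rw [hH]
      exact_mod_cast this
    have hlead : (1 : ℝ) ≤ |(g.coeff (M + 1) : ℝ)| := by
      exact_mod_cast Int.one_le_abs hg
    have hv : |(v : ℝ) * homEval g M u v| ≤ 1 / 2 * H ^ (M + 1) := by
      rw [abs_mul]
      calc |(v : ℝ)| * |(homEval g M u v : ℝ)| ≤ (k * H) * (S * H ^ M) := by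
            gcongr
        _ = 1 / 2 * H ^ (M + 1) := by rw [hk, pow_succ]; field_simp
    have hle : k * H ≤ H := by
      have : k ≤ 1 := by
        rw [hk, div_le_one (by positivity)]
        have : (1 : ℝ) ≤ S := by exact_mod_cast hS
        linarith
      nlinarith
    have hu : |(u : ℝ)| = H := by
      rcases le_total |(u : ℝ)| |(v : ℝ)| with h | h
      · rw [max_eq_right h] at hHmax
        linarith
      · rw [max_eq_left h] at hHmax; exact hHmax.symm
    have h1 : H ^ (M + 1) ≤ |(g.coeff (M + 1) : ℝ) * (u : ℝ) ^ (M + 1)| := by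
      rw [abs_mul, abs_pow, hu]
      nlinarith [pow_nonneg hH0 (M + 1)]
    have h2 : ((homEval g (M + 1) u v : ℤ) : ℝ) =
        g.coeff (M + 1) * (u : ℝ) ^ (M + 1) - -(v * homEval g M u v) := by
      rw [homEval_succ]; push_cast; ring
    have h3 := abs_sub_abs_le_abs_sub ((g.coeff (M + 1) : ℝ) * (u : ℝ) ^ (M + 1))
      (-((v : ℝ) * homEval g M u v))
    rw [abs_neg, ← h2] at h3
    calc min (k ^ (M + 1)) (1 / 2) * H ^ (M + 1) ≤ 1 / 2 * H ^ (M + 1) := by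
          gcongr; exact min_le_right _ _
      _ ≤ _ := by linarith

lemma radNat_le_of_subset {m n : ℕ} (h : m.primeFactors ⊆ n.primeFactors) :
    radNat m ≤ radNat n :=
  Finset.prod_le_prod_of_subset_of_one_le' h
    fun _ hp _ => (Nat.prime_of_mem_primeFactors hp).one_le

lemma radNat_mul_le {x : ℕ} (n : ℕ) (hx : x ≠ 0) : radNat (x * n) ≤ x * radNat n := by
  rcases eq_or_ne n 0 with rfl | hn
  · simpa [radNat] using Nat.one_le_iff_ne_zero.mpr hx
  have h1 : radNat x ≤ x := Nat.le_of_dvd (Nat.pos_of_ne_zero hx) (Nat.prod_primeFactors_dvd x)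
  calc radNat (x * n) = ∏ p ∈ x.primeFactors ∪ n.primeFactors, p := by
        rw [radNat, Nat.primeFactors_mul hx hn]
    _ ≤ radNat x * radNat n := by
        rw [radNat, radNat, ← Finset.prod_union_inter]
        exact Nat.le_mul_of_pos_right _
          (Finset.prod_pos fun p hp => (Nat.prime_of_mem_primeFactors (Finset.mem_inter.mp hp).1).pos)
    _ ≤ x * radNat n := Nat.mul_le_mul_right _ h1

/-- The abc-conjecture for coprime nonzero integers of arbitrary sign. -/
lemma abc_int (habc : ABCConjecture) (η : ℝ) (hη : 0 < η) : ∃ K : ℝ, 0 < K ∧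
    ∀ a b c : ℤ, a ≠ 0 → b ≠ 0 → c ≠ 0 → IsCoprime a b → a + b = c →
      max |(a : ℝ)| |(c : ℝ)| ≤ K * (radNat (a * b * c).natAbs : ℝ) ^ (1 + η) := by
  obtain ⟨K, hK, h⟩ := habc η hη
  refine ⟨K, hK, fun a b c ha hb hc hab hsum => ?_⟩
  have hca : IsCoprime c a := by
    rw [← hsum]
    simpa [add_comm] using (IsCoprime.add_mul_left_left (y := a) hab.symm 1)
  have hcb : IsCoprime c b := by
    rw [← hsum]
    simpa using (IsCoprime.add_mul_left_left (y := b) hab 1)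
  have hA : (a.natAbs : ℝ) = |(a : ℝ)| := by rw [Nat.cast_natAbs]; simp
  have hC : (c.natAbs : ℝ) = |(c : ℝ)| := by rw [Nat.cast_natAbs]; simp
  rw [Int.natAbs_mul, Int.natAbs_mul, ← hA, ← hC]
  have ha' := Int.natAbs_pos.mpr ha
  have hb' := Int.natAbs_pos.mpr hb
  have hc' := Int.natAbs_pos.mpr hc
  rw [Int.isCoprime_iff_nat_coprime] at hab hca hcb
  -- the signs decide which of the three absolute values is the sum of the other two
  have hcases : a.natAbs + b.natAbs = c.natAbs ∨ c.natAbs + b.natAbs = a.natAbs ∨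
      c.natAbs + a.natAbs = b.natAbs := by omega
  rcases hcases with h1 | h1 | h1
  · have := h _ _ _ ha' hb' hc' hab h1
    refine max_le (le_trans ?_ this) this
    exact_mod_cast (by omega : a.natAbs ≤ c.natAbs)
  · have := h _ _ _ hc' hb' ha' hcb h1
    rw [show c.natAbs * b.natAbs * a.natAbs = a.natAbs * b.natAbs * c.natAbs by ring] at this
    refine max_le this (le_trans ?_ this)
    exact_mod_cast (by omega : c.natAbs ≤ a.natAbs)
  · have := h _ _ _ hc' ha' hb' hca h1
    rw [show c.natAbs * a.natAbs * b.natAbs = a.natAbs * b.natAbs * c.natAbs by ring] at this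
    refine max_le (le_trans ?_ this) (le_trans ?_ this)
    · exact_mod_cast (by omega : a.natAbs ≤ b.natAbs)
    · exact_mod_cast (by omega : c.natAbs ≤ b.natAbs)

/-- The abc-conjecture for integers whose common divisor divides `M`. -/
lemma abc_bounded_gcd (habc : ABCConjecture) (η : ℝ) (hη : 0 < η) : ∃ K : ℝ, 0 < K ∧
    ∀ (M : ℕ) (a b c : ℤ), 0 < M → a ≠ 0 → b ≠ 0 → c ≠ 0 → (Int.gcd a c ∣ M) → a + b = c →
      max |(a : ℝ)| |(c : ℝ)| ≤ M * K * (radNat (a * b * c).natAbs : ℝ) ^ (1 + η) := by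
  obtain ⟨K, hK, h⟩ := abc_int habc η hη
  refine ⟨K, hK, fun M a b c hM ha hb hc hg hsum => ?_⟩
  set g : ℤ := (Int.gcd a c : ℤ) with hgdef
  have hg0 : (0 : ℤ) < g := by
    rw [hgdef]; exact_mod_cast Int.gcd_pos_of_ne_zero_left c ha
  obtain ⟨a', ha'⟩ : g ∣ a := Int.gcd_dvd_left _ _
  obtain ⟨c', hc'⟩ : g ∣ c := Int.gcd_dvd_right _ _
  have hb' : b = g * (c' - a') := by linear_combination hsum - ha' + hc'
  have hcop : IsCoprime a' c' := by
    rw [Int.isCoprime_iff_gcd_eq_one]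
    have h1 : Int.gcd (g * a') (g * c') = Int.gcd a c := by rw [← ha', ← hc']
    rw [Int.gcd_mul_left] at h1
    have h2 : g.natAbs = Int.gcd a c := by simp [hgdef]
    rw [h2] at h1
    have h3 : 0 < Int.gcd a c := Int.gcd_pos_of_ne_zero_left c ha
    exact Nat.eq_of_mul_eq_mul_left h3 (by rw [h1, mul_one])
  have hcop' : IsCoprime a' (c' - a') := by
    have := IsCoprime.add_mul_left_right hcop (-1)
    rwa [mul_neg_one, ← sub_eq_add_neg] at this
  have ha0 : a' ≠ 0 := fun h0 => ha (by rw [ha', h0, mul_zero])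
  have hc0 : c' ≠ 0 := fun h0 => hc (by rw [hc', h0, mul_zero])
  have hb0 : c' - a' ≠ 0 := fun h0 => hb (by rw [hb', h0, mul_zero])
  have hmain := h a' (c' - a') c' ha0 hb0 hc0 hcop' (by ring)
  have hrad : radNat (a' * (c' - a') * c').natAbs ≤ radNat (a * b * c).natAbs := by
    apply radNat_le_of_subset
    apply Nat.primeFactors_mono
    · rw [Int.natAbs_dvd_natAbs, hb']
      refine ⟨g ^ 3, ?_⟩
      conv_lhs => rw [ha', hc']
      ring
    · exact Int.natAbs_ne_zero.mpr (mul_ne_zero (mul_ne_zero ha hb) hc)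
  have hgM : (g : ℝ) ≤ M := by
    rw [hgdef]; exact_mod_cast Nat.le_of_dvd hM hg
  have hg0' : (0 : ℝ) < g := by exact_mod_cast hg0
  have hAr : (a : ℝ) = g * a' := by exact_mod_cast ha'
  have hCr : (c : ℝ) = g * c' := by exact_mod_cast hc'
  rw [hAr, hCr, abs_mul, abs_mul, abs_of_pos hg0', ← mul_max_of_nonneg _ _ hg0'.le, mul_assoc]
  have hK' : max |(a' : ℝ)| |(c' : ℝ)| ≤ K * (radNat (a * b * c).natAbs : ℝ) ^ (1 + η) :=
    hmain.trans (by gcongr)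
  exact mul_le_mul hgM hK' (by positivity) (by positivity)

/-! ### Auxiliary estimates -/

/-- Extracting `ρ` from an abc-type inequality; here `D / (1 + η) ≥ D - D η` is used. -/
lemma rpow_step {κ B η δ D s H ρ : ℝ} (hκ : 0 < κ) (hB : 0 < B) (hη : 0 < η) (hD : 0 ≤ D)
    (hδ : D * η ≤ δ) (hH : 1 ≤ H) (hρ : 0 < ρ)
    (h : κ * H ^ D ≤ (B * H ^ s * ρ) ^ (1 + η)) :
    κ ^ (1 / (1 + η)) / B * H ^ (D - s - δ) ≤ ρ := by
  have hH0 : 0 < H := by linarith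
  have h1 : (κ * H ^ D) ^ (1 / (1 + η)) ≤ B * H ^ s * ρ := by
    have := Real.rpow_le_rpow (by positivity) h (by positivity : 0 ≤ 1 / (1 + η))
    rwa [← Real.rpow_mul (by positivity), mul_one_div_cancel (by positivity), Real.rpow_one] at this
  rw [Real.mul_rpow hκ.le (by positivity), ← Real.rpow_mul hH0.le] at h1
  have h2 : D - δ ≤ D * (1 / (1 + η)) := by
    rw [mul_one_div, le_div_iff₀ (by positivity)]
    nlinarith [mul_nonneg hD hη.le, mul_nonneg (mul_nonneg hD hη.le) hη.le]
  have h3 : H ^ (D - δ) ≤ H ^ (D * (1 / (1 + η))) := Real.rpow_le_rpow_of_exponent_le hH h2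
  have h4 : κ ^ (1 / (1 + η)) * H ^ (D - δ) ≤ B * H ^ s * ρ :=
    le_trans (by gcongr) h1
  have h5 : D - s - δ = (D - δ) - s := by ring
  rw [h5, Real.rpow_sub hH0]
  rw [div_mul_div_comm, div_le_iff₀ (by positivity)]
  linarith

/-- Points of bounded height only affect the constant, for either sign of the exponent `e`. -/
lemma small_height {H H₀ e : ℝ} (hH : 1 ≤ H) (hle : H ≤ H₀) : H₀ ^ (-|e|) * H ^ e ≤ 1 := by
  have h0 : 0 < H₀ := by linarith
  rw [Real.rpow_neg h0.le, inv_mul_le_iff₀ (by positivity), mul_one]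
  calc H ^ e ≤ H ^ |e| := Real.rpow_le_rpow_of_exponent_le hH (le_abs_self e)
    _ ≤ H₀ ^ |e| := Real.rpow_le_rpow (by linarith) hle (abs_nonneg e)

lemma one_le_height {u v : ℤ} (h : IsCoprime u v) : (1 : ℝ) ≤ ((max |u| |v| : ℤ) : ℝ) := by
  have : (1 : ℤ) ≤ max |u| |v| := by
    by_contra! hlt
    have hu : u = 0 := by
      have := le_max_left |u| |v|
      rw [← abs_nonpos_iff]; omega
    have hv : v = 0 := by
      have := le_max_right |u| |v|
      rw [← abs_nonpos_iff]; omega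
    subst hu hv
    exact not_isCoprime_zero_zero h
  exact_mod_cast this

/-- Coprime pairs `(u, v)` for which `u / v` is infinite or a root of `G` have bounded height, being
determined up to sign by `u / v`. -/
lemma exists_height_bound_of_root (G : ℚ[X]) (hG : G ≠ 0) : ∃ H₀ : ℝ, 1 ≤ H₀ ∧
    ∀ u v : ℤ, IsCoprime u v → (v = 0 ∨ G.eval ((u : ℚ) / v) = 0) →
      ((max |u| |v| : ℤ) : ℝ) ≤ H₀ := by
  refine ⟨1 + ∑ x ∈ G.roots.toFinset, ((max |x.num| (x.den : ℤ) : ℤ) : ℝ), ?_, ?_⟩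
  · have : 0 ≤ ∑ x ∈ G.roots.toFinset, ((max |x.num| (x.den : ℤ) : ℤ) : ℝ) :=
      Finset.sum_nonneg fun x _ => by positivity
    linarith
  intro u v huv h
  have hnn : ∀ x ∈ G.roots.toFinset, (0 : ℝ) ≤ ((max |x.num| (x.den : ℤ) : ℤ) : ℝ) :=
    fun x _ => by positivity
  by_cases hv : v = 0
  · subst hv
    have hu : |u| = 1 := by
      rw [isCoprime_zero_right] at huv
      exact Int.isUnit_iff_abs_eq.mp huv
    have := Finset.sum_nonneg hnn
    rw [hu]
    simpa using this
  · have hroot : (u : ℚ) / v ∈ G.roots.toFinset := by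
      rw [Multiset.mem_toFinset, mem_roots hG]
      exact h.resolve_left hv
    have hnum : max |u| |v| = max |((u : ℚ) / v).num| (((u : ℚ) / v).den : ℤ) := by
      have hc : u.natAbs.Coprime v.natAbs := Int.isCoprime_iff_nat_coprime.mp huv
      rcases lt_or_gt_of_ne hv with hneg | hpos
      · have h1 : (u : ℚ) / v = ((-u : ℤ) : ℚ) / ((-v : ℤ) : ℚ) := by push_cast; rw [neg_div_neg_eq]
        rw [h1, Rat.num_div_eq_of_coprime (by omega) (by simpa using hc),
          Rat.den_div_eq_of_coprime (by omega) (by simpa using hc), abs_neg, abs_of_neg hneg]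
      · rw [Rat.num_div_eq_of_coprime hpos hc, Rat.den_div_eq_of_coprime hpos hc, abs_of_pos hpos]
    have := Finset.single_le_sum hnn hroot
    rw [hnum]
    linarith

/-- If `a ≡ l u ^ D` modulo `v`, common divisors of `a` and `d v ^ D` divide the constant
`d l ^ D`: modulo such a divisor both `d l ^ D u ^ (D * D)` and `d l ^ D v ^ D` vanish. -/
lemma gcd_dvd_const {u v a t d l g : ℤ} {D : ℕ} (huv : IsCoprime u v)
    (ha : a = l * u ^ D + v * t) (hga : g ∣ a) (hgc : g ∣ d * v ^ D) : g ∣ d * l ^ D := by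
  have h1 : g ∣ d * l ^ D * u ^ (D * D) := by
    have h2 : a ∣ (l * u ^ D) ^ D - (-(v * t)) ^ D :=
      dvd_trans ⟨1, by rw [ha]; ring⟩ (sub_dvd_pow_sub_pow (l * u ^ D) (-(v * t)) D)
    have h3 : g ∣ d * ((l * u ^ D) ^ D - (-(v * t)) ^ D) := (hga.trans h2).mul_left d
    have h4 : g ∣ (d * v ^ D) * (-t) ^ D := hgc.mul_right _
    have h5 := dvd_add h3 h4
    have h6 : d * ((l * u ^ D) ^ D - (-(v * t)) ^ D) + (d * v ^ D) * (-t) ^ D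
        = d * l ^ D * u ^ (D * D) := by
      rw [show -(v * t) = v * (-t) by ring, mul_pow, mul_pow, pow_mul]; ring
    rwa [h6] at h5
  have h2 : g ∣ d * l ^ D * v ^ D := by
    have := hgc.mul_right (l ^ D)
    rwa [mul_right_comm] at this
  obtain ⟨x, y, hxy⟩ := (huv.pow (m := D * D) (n := D))
  have := dvd_add (h1.mul_left x) (h2.mul_left y)
  rwa [show x * (d * l ^ D * u ^ (D * D)) + y * (d * l ^ D * v ^ D)
    = d * l ^ D * (x * u ^ (D * D) + y * v ^ D) by ring, hxy, mul_one] at this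

/-! ### The main estimates -/

/-- Under the abc-conjecture, `rad F(u,v) ≫ H ^ (r - 2 - δ)`. -/
lemma radical_lower_bound (habc : ABCConjecture) (F : MvPolynomial (Fin 2) ℤ) (r : ℕ)
    (hF : F ≠ 0) (hhom : F.IsHomogeneous r) (hsq : Squarefree F) (δ : ℝ) (hδ : 0 < δ) :
    ∃ c : ℝ, 0 < c ∧ ∀ u v : ℤ, IsCoprime u v → MvPolynomial.eval ![u, v] F ≠ 0 →
      c * ((max |u| |v| : ℤ) : ℝ) ^ ((r : ℝ) - 2 - δ) ≤
        (radNat (MvPolynomial.eval ![u, v] F).natAbs : ℝ) := by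
  obtain ⟨p, hpr, hrp, hpsq, hFp⟩ := exists_dehomogenization F r hF hhom hsq
  set ι := Int.castRingHom ℚ
  obtain ⟨f, G, Q, k, hfpos, hG0, hdeg, hpow⟩ := exists_belyi_radical (p.map ι) hpsq
  have hpdeg : (p.map ι).natDegree = p.natDegree :=
    natDegree_map_eq_of_injective Int.cast_injective p
  rw [hpdeg] at hdeg
  set D := f.natDegree with hD
  -- the complementary form has degree `s`, where `r + s = D + 2`
  obtain ⟨s, hs⟩ : ∃ s, r + s = D + 2 := ⟨D + 2 - r, by omega⟩
  obtain ⟨d, f₀, hd, hf₀deg, hf₀⟩ := exists_clear_denominators f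
  obtain ⟨eG, G₀, heG, hG₀deg, hG₀⟩ := exists_clear_denominators G
  obtain ⟨eQ, Q₀, heQ, hQ₀deg, hQ₀⟩ := exists_clear_denominators Q
  obtain ⟨eR, R₀, heR, hR₀deg, hR₀⟩ := exists_clear_denominators (p.map ι * G)
  have hp0 : p.map ι ≠ 0 := hpsq.ne_zero
  have hRdeg : R₀.natDegree = D + 1 := by
    rw [hR₀deg, natDegree_mul hp0 hG0, hpdeg, hdeg]
  have hlead : f₀.coeff D ≠ 0 := by
    rw [hD, ← hf₀deg, coeff_natDegree, Ne, leadingCoeff_eq_zero]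
    rintro rfl
    simp at hf₀deg
    omega
  obtain ⟨κ, hκ, hheight⟩ := exists_height_lower f₀ hfpos hlead
  obtain ⟨S, hS, hSb⟩ := abs_homEval_le G₀ s
  obtain ⟨H₀, hH₀1, hH₀⟩ := exists_height_bound_of_root G hG0
  set η : ℝ := δ / D with hη
  have hD0 : (0 : ℝ) < D := by exact_mod_cast hfpos
  have hη0 : 0 < η := div_pos hδ hD0
  obtain ⟨K, hK, habcK⟩ := abc_bounded_gcd habc η hη0
  set M : ℕ := d * (f₀.coeff D).natAbs ^ D with hM
  have hM0 : 0 < M := Nat.mul_pos hd (pow_pos (Int.natAbs_pos.mpr hlead) _)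
  have hM0' : (0 : ℝ) < M := by exact_mod_cast hM0
  set E : ℕ := d * eQ * eR with hE
  have hE0 : 0 < E := by positivity
  have hE0' : (0 : ℝ) < E := by exact_mod_cast hE0
  have hS' : (0 : ℝ) < S := by exact_mod_cast hS
  set e : ℝ := (r : ℝ) - 2 - δ with he
  set κ' : ℝ := κ / (M * K) with hκ'
  have hκ'0 : 0 < κ' := by positivity
  refine ⟨min (H₀ ^ (-|e|)) (κ' ^ (1 / (1 + η)) / (E * S)), by positivity, ?_⟩
  intro u v huv hFne
  set n : ℤ := MvPolynomial.eval ![u, v] F with hn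
  have hH1 := one_le_height huv
  set H : ℝ := ((max |u| |v| : ℤ) : ℝ) with hH
  have hρ : (1 : ℝ) ≤ radNat n.natAbs := by exact_mod_cast radNat_pos _
  -- finitely many pairs, up to sign, are absorbed by the constant
  by_cases hexc : v = 0 ∨ G.eval ((u : ℚ) / v) = 0
  · calc _ ≤ H₀ ^ (-|e|) * H ^ e := by gcongr; exact min_le_left _ _
      _ ≤ 1 := small_height hH1 (hH₀ u v huv hexc)
      _ ≤ _ := hρ
  push Not at hexc
  obtain ⟨hv, hGx⟩ := hexc
  set x : ℚ := (u : ℚ) / v with hx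
  have hvq : (v : ℚ) ≠ 0 := by exact_mod_cast hv
  set a : ℤ := homEval f₀ D u v with ha
  set z : ℤ := homEval G₀ s u v with hz
  set w : ℤ := homEval Q₀ Q.natDegree u v with hw
  set y : ℤ := homEval R₀ (D + 1) u v with hy
  have hnq : (n : ℚ) = v ^ r * (p.map ι).eval x := by
    rw [hn, hFp, homEval_cast p hpr u v hv]
  have haq : (a : ℚ) = d * (v ^ D * f.eval x) := by
    rw [ha, homEval_cast f₀ hf₀deg.le u v hv, hf₀, eval_mul, eval_C]; ring
  have hzq : (z : ℚ) = eG * (v ^ s * G.eval x) := by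
    rw [hz, homEval_cast G₀ (by omega) u v hv, hG₀, eval_mul, eval_C]; ring
  have hwq : (w : ℚ) = eQ * (v ^ Q.natDegree * Q.eval x) := by
    rw [hw, homEval_cast Q₀ hQ₀deg.le u v hv, hQ₀, eval_mul, eval_C]; ring
  have hyq : (y : ℚ) = eR * (v ^ (D + 1) * ((p.map ι).eval x * G.eval x)) := by
    rw [hy, homEval_cast R₀ hRdeg.le u v hv, hR₀, eval_mul, eval_C, eval_mul]; ring
  have hpowx : ((p.map ι).eval x * G.eval x) ^ k = f.eval x * (f.eval x - 1) * Q.eval x := by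
    have := congrArg (eval x) hpow
    simpa using this
  have hpx : (p.map ι).eval x ≠ 0 := by
    intro h0
    rw [h0, mul_zero] at hnq
    exact hFne (by exact_mod_cast hnq)
  have hfx : f.eval x ≠ 0 ∧ f.eval x - 1 ≠ 0 := by
    have h1 : f.eval x * (f.eval x - 1) * Q.eval x ≠ 0 := by
      rw [← hpowx]; exact pow_ne_zero _ (mul_ne_zero hpx hGx)
    exact ⟨left_ne_zero_of_mul (left_ne_zero_of_mul h1),
      right_ne_zero_of_mul (left_ne_zero_of_mul h1)⟩
  have hdq : (d : ℚ) ≠ 0 := by exact_mod_cast (ne_of_gt hd)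
  -- the abc-triple `a + b = c`
  set c : ℤ := d * v ^ D with hc
  set b : ℤ := c - a with hb
  have hbq : (b : ℚ) = -(d * (v ^ D * (f.eval x - 1))) := by
    rw [hb, hc]; push_cast; rw [haq]; ring
  have ha0 : a ≠ 0 := by
    have : (a : ℚ) ≠ 0 := by
      rw [haq]; exact mul_ne_zero hdq (mul_ne_zero (pow_ne_zero _ hvq) hfx.1)
    exact_mod_cast this
  have hb0 : b ≠ 0 := by
    have : (b : ℚ) ≠ 0 := by
      rw [hbq]; exact neg_ne_zero.mpr (mul_ne_zero hdq (mul_ne_zero (pow_ne_zero _ hvq) hfx.2))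
    exact_mod_cast this
  have hc0 : c ≠ 0 := mul_ne_zero (by exact_mod_cast hd.ne') (pow_ne_zero _ hv)
  have hz0 : z ≠ 0 := by
    have : (z : ℚ) ≠ 0 := by
      rw [hzq]
      exact mul_ne_zero (by exact_mod_cast heG.ne') (mul_ne_zero (pow_ne_zero _ hvq) hGx)
    exact_mod_cast this
  have hgcd : Int.gcd a c ∣ M := by
    obtain ⟨t, ht⟩ : ∃ t, a = f₀.coeff D * u ^ D + v * t := by
      obtain ⟨D', hD'⟩ : ∃ D', D = D' + 1 := ⟨D - 1, by omega⟩
      exact ⟨homEval f₀ D' u v, by rw [ha, hD', homEval_succ]⟩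
    have h1 : (Int.gcd a c : ℤ) ∣ d * f₀.coeff D ^ D :=
      gcd_dvd_const huv ht (Int.gcd_dvd_left _ _) (Int.gcd_dvd_right _ _)
    have h2 := Int.natAbs_dvd_natAbs.mpr h1
    simpa [hM, Int.natAbs_mul, Int.natAbs_pow] using h2
  -- every prime dividing `a b c` divides `E · z · F(u, v)`
  have hrel1 : (eR : ℤ) * (n * z) = eG * v * y := by
    have : ((eR : ℤ) : ℚ) * (n * z) = (eG : ℤ) * v * y := by
      rw [hnq, hzq, hyq]
      have h1 : (v : ℚ) ^ r * v ^ s = v * v ^ (D + 1) := by rw [← pow_add, hs]; ring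
      push_cast
      linear_combination (eR * (p.map ι).eval x * eG * G.eval x : ℚ) * h1
    exact_mod_cast this
  have hrel2 : (n * z) ^ k * ((d : ℤ) ^ 2 * eQ) * v ^ (2 * D + Q.natDegree) =
      -(eG ^ k * v ^ (k * (D + 2)) * (a * b * w)) := by
    have : ((n : ℚ) * z) ^ k * (((d : ℤ) : ℚ) ^ 2 * (eQ : ℤ)) * v ^ (2 * D + Q.natDegree) =
        -((eG : ℤ) ^ k * v ^ (k * (D + 2)) * (a * b * w)) := by
      have h1 : (n : ℚ) * z = v ^ (D + 2) * eG * ((p.map ι).eval x * G.eval x) := by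
        rw [hnq, hzq, ← hs, pow_add]; ring
      rw [h1, mul_pow, hpowx, haq, hbq, hwq, mul_pow, ← pow_mul, mul_comm (D + 2) k]
      push_cast
      ring
    exact_mod_cast this
  have hprimes : (a * b * c).natAbs.primeFactors ⊆
      ((E * z.natAbs) * n.natAbs).primeFactors := by
    intro ℓ hℓ
    have hℓp := Nat.prime_of_mem_primeFactors hℓ
    have hℓi : Prime (ℓ : ℤ) := Nat.prime_iff_prime_int.mp hℓp
    have hdvd : (ℓ : ℤ) ∣ a * b * c := Int.natCast_dvd.mpr (Nat.dvd_of_mem_primeFactors hℓ)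
    have hgoal : (ℓ : ℤ) ∣ (d * eQ * eR : ℤ) * z * n → ℓ ∈ ((E * z.natAbs) * n.natAbs).primeFactors := by
      intro h
      refine Nat.mem_primeFactors.mpr ⟨hℓp, ?_, ?_⟩
      · have := Int.natCast_dvd.mp h
        simpa [hE, Int.natAbs_mul] using this
      · exact mul_ne_zero (mul_ne_zero hE0.ne' (Int.natAbs_ne_zero.mpr hz0))
          (Int.natAbs_ne_zero.mpr hFne)
    have hofv : (ℓ : ℤ) ∣ v → (ℓ : ℤ) ∣ (d * eQ * eR : ℤ) * z * n := by
      intro h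
      have h1 : (ℓ : ℤ) ∣ eR * (n * z) := by
        rw [hrel1]; exact (h.mul_left _).mul_right _
      exact (h1.mul_left (d * eQ : ℤ)).trans ⟨1, by ring⟩
    have hofd : (ℓ : ℤ) ∣ d → (ℓ : ℤ) ∣ (d * eQ * eR : ℤ) * z * n := fun h =>
      (((h.mul_right _).mul_right _).mul_right _).mul_right _
    apply hgoal
    rcases hℓi.dvd_or_dvd hdvd with h | h
    · have h1 : (ℓ : ℤ) ∣ (n * z) ^ k * ((d : ℤ) ^ 2 * eQ) * v ^ (2 * D + Q.natDegree) := by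
        rw [hrel2]
        exact (Dvd.dvd.mul_left (h.mul_right w) _).neg_right
      rcases hℓi.dvd_or_dvd h1 with h1 | h1
      · rcases hℓi.dvd_or_dvd h1 with h1 | h1
        · have h2 := hℓi.dvd_of_dvd_pow h1
          exact (h2.mul_left (d * eQ * eR : ℤ)).trans ⟨1, by ring⟩
        · rcases hℓi.dvd_or_dvd h1 with h1 | h1
          · exact hofd (hℓi.dvd_of_dvd_pow h1)
          · exact (((h1.mul_left _).mul_right _).mul_right _).mul_right _
      · exact hofv (hℓi.dvd_of_dvd_pow h1)
    · rcases hℓi.dvd_or_dvd h with h | h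
      · exact hofd h
      · exact hofv (hℓi.dvd_of_dvd_pow h)
  have hrad : (radNat (a * b * c).natAbs : ℝ) ≤ E * S * H ^ (s : ℝ) * radNat n.natAbs := by
    have h1 : radNat (a * b * c).natAbs ≤ E * z.natAbs * radNat n.natAbs :=
      (radNat_le_of_subset hprimes).trans
        (radNat_mul_le _ (mul_ne_zero hE0.ne' (Int.natAbs_ne_zero.mpr hz0)))
    have h2 : (z.natAbs : ℝ) ≤ S * H ^ (s : ℝ) := by
      rw [Real.rpow_natCast, Nat.cast_natAbs, hH]
      exact_mod_cast hSb u v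
    calc (radNat (a * b * c).natAbs : ℝ) ≤ E * z.natAbs * radNat n.natAbs := by exact_mod_cast h1
      _ ≤ E * (S * H ^ (s : ℝ)) * radNat n.natAbs := by gcongr
      _ = _ := by ring
  have hmain : κ' * H ^ (D : ℝ) ≤ (E * S * H ^ (s : ℝ) * radNat n.natAbs) ^ (1 + η) := by
    have h1 : κ * H ^ (D : ℝ) ≤ max |(a : ℝ)| |(c : ℝ)| := by
      rw [Real.rpow_natCast]
      refine (hheight u v).trans (max_le_max le_rfl ?_)
      have hd1 : (1 : ℝ) ≤ d := by exact_mod_cast hd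
      rw [hc]
      push_cast
      rw [abs_mul, abs_pow, Nat.abs_cast]
      exact le_mul_of_one_le_left (by positivity) hd1
    have h2 := h1.trans (habcK M a b c hM0 ha0 hb0 hc0 hgcd (by rw [hb]; ring))
    rw [hκ', div_mul_eq_mul_div, div_le_iff₀ (by positivity), mul_comm _ ((M : ℝ) * K)]
    refine h2.trans ?_
    gcongr
  have hfin := rpow_step hκ'0 (by positivity : (0 : ℝ) < E * S) hη0 hD0.le
    (δ := δ) (mul_div_cancel₀ δ hD0.ne').le hH1 (by linarith) hmain
  have hexp : (D : ℝ) - s - δ = e := by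
    have : (r : ℝ) + s = D + 2 := by exact_mod_cast hs
    rw [he]; linarith
  rw [hexp] at hfin
  refine le_trans ?_ hfin
  gcongr
  exact min_le_right _ _

/-- Splitting the primes dividing `n` by multiplicity, with `A` the product of those of
multiplicity below `q` and `B` the product of the others: `(A B) ^ q = A ^ (q-1) · (A B ^ q)` and
`A B ^ q ≤ n`. -/
lemma radNat_pow_le (n q : ℕ) (hn : n ≠ 0) (hq : 1 ≤ q) :
    radNat n ^ q ≤
      (∏ p ∈ n.primeFactors.filter (fun p => n.factorization p ≤ q - 1), p) ^ (q - 1) * n := by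
  set A := ∏ p ∈ n.primeFactors.filter (fun p => n.factorization p ≤ q - 1), p with hA
  set B := ∏ p ∈ n.primeFactors.filter (fun p => ¬ n.factorization p ≤ q - 1), p with hB
  have hAB : radNat n = A * B := (Finset.prod_filter_mul_prod_filter_not _ _ _).symm
  have hle : A * B ^ q ≤ n := by
    have h1 : n = (∏ p ∈ n.primeFactors.filter (fun p => n.factorization p ≤ q - 1),
          p ^ n.factorization p) *
        ∏ p ∈ n.primeFactors.filter (fun p => ¬ n.factorization p ≤ q - 1),
          p ^ n.factorization p := by
      rw [Finset.prod_filter_mul_prod_filter_not]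
      exact (Nat.prod_factorization_pow_eq_self hn).symm
    conv_rhs => rw [h1]
    rw [hA, hB, ← Finset.prod_pow]
    refine Nat.mul_le_mul (Finset.prod_le_prod' fun p hp => ?_) (Finset.prod_le_prod' fun p hp => ?_)
    · have hp' := (Finset.mem_filter.mp hp).1
      have hpos : n.factorization p ≠ 0 := by
        rw [← Finsupp.mem_support_iff]
        exact hp'
      exact Nat.le_self_pow hpos p
    · obtain ⟨hp1, hp2⟩ := Finset.mem_filter.mp hp
      exact Nat.pow_le_pow_right (Nat.prime_of_mem_primeFactors hp1).pos (by omega)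
  calc radNat n ^ q = A ^ (q - 1) * (A * B ^ q) := by
        obtain ⟨k, rfl⟩ : ∃ k, q = k + 1 := ⟨q - 1, by omega⟩
        rw [hAB, Nat.add_sub_cancel]; ring
    _ ≤ _ := Nat.mul_le_mul_left _ hle

theorem stmt14 (habc : ABCConjecture) (F : MvPolynomial (Fin 2) ℤ) (r q : ℕ)
    (hq : 2 ≤ q) (hF : F ≠ 0) (hhom : F.IsHomogeneous r) (hsq : Squarefree F) :
    ∀ ε : ℝ, 0 < ε → ∃ c : ℝ, 0 < c ∧
      ∀ u v : ℤ, IsCoprime u v → MvPolynomial.eval ![u, v] F ≠ 0 →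
        c * ((max |u| |v| : ℤ) : ℝ) ^ ((r : ℝ) - 2 - 2 / ((q : ℝ) - 1) - ε) ≤
          ((∏ p ∈ Finset.filter
                (fun p => (MvPolynomial.eval ![u, v] F).natAbs.factorization p ≤ q - 1)
                (MvPolynomial.eval ![u, v] F).natAbs.primeFactors, p : ℕ) : ℝ) := by
  intro ε hε
  have hq1 : (0 : ℝ) < (q : ℝ) - 1 := by
    have : (2 : ℝ) ≤ q := by exact_mod_cast hq
    linarith
  have hq0 : (0 : ℝ) < q := by linarith
  -- this `δ` turns the loss `q δ / (q - 1)` into `ε`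
  set δ : ℝ := ε * (q - 1) / q with hδ
  have hδ0 : 0 < δ := by positivity
  obtain ⟨c₁, hc₁, hrad⟩ := radical_lower_bound habc F r hF hhom hsq δ hδ0
  obtain ⟨p, -, -, -, hFp⟩ := exists_dehomogenization F r hF hhom hsq
  obtain ⟨S, hS, hSb⟩ := abs_homEval_le p r
  have hS' : (0 : ℝ) < S := by exact_mod_cast hS
  refine ⟨(c₁ ^ q / S) ^ (1 / ((q : ℝ) - 1)), by positivity, fun u v huv hne => ?_⟩
  have hR := hrad u v huv hne
  have hH1 := one_le_height huv
  have hbound : ((MvPolynomial.eval ![u, v] F).natAbs : ℝ) ≤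
      S * ((max |u| |v| : ℤ) : ℝ) ^ r := by
    rw [Nat.cast_natAbs, hFp]
    exact_mod_cast hSb u v
  have hpow := radNat_pow_le (MvPolynomial.eval ![u, v] F).natAbs q
    (Int.natAbs_ne_zero.mpr hne) (by omega)
  set H : ℝ := ((max |u| |v| : ℤ) : ℝ) with hH
  set n := (MvPolynomial.eval ![u, v] F).natAbs
  set A := ∏ p ∈ Finset.filter (fun p => n.factorization p ≤ q - 1) n.primeFactors, p
  have hH0 : 0 < H := by linarith
  have hchain : (c₁ * H ^ ((r : ℝ) - 2 - δ)) ^ q ≤ (A : ℝ) ^ (q - 1) * (S * H ^ r) :=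
    calc (c₁ * H ^ ((r : ℝ) - 2 - δ)) ^ q ≤ (radNat n : ℝ) ^ q := by gcongr
      _ ≤ (A : ℝ) ^ (q - 1) * n := by exact_mod_cast hpow
      _ ≤ _ := by gcongr
  have hA : c₁ ^ q / S * H ^ (((r : ℝ) - 2 - δ) * q - r) ≤ (A : ℝ) ^ ((q : ℝ) - 1) := by
    have hcast : ((q : ℝ) - 1) = ((q - 1 : ℕ) : ℝ) := by
      rw [Nat.cast_sub (by omega)]; simp
    rw [hcast, Real.rpow_natCast, Real.rpow_sub hH0, Real.rpow_mul hH0.le, Real.rpow_natCast,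
      Real.rpow_natCast, div_mul_div_comm, div_le_iff₀ (by positivity), ← mul_pow]
    exact hchain
  have hroot := Real.rpow_le_rpow (by positivity) hA (by positivity : 0 ≤ 1 / ((q : ℝ) - 1))
  rw [← Real.rpow_mul (by positivity), mul_one_div_cancel hq1.ne', Real.rpow_one,
    Real.mul_rpow (by positivity) (by positivity), ← Real.rpow_mul hH0.le] at hroot
  have hexp : (((r : ℝ) - 2 - δ) * q - r) * (1 / ((q : ℝ) - 1)) =
      (r : ℝ) - 2 - 2 / ((q : ℝ) - 1) - ε := by
    rw [hδ]
    field_simp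
    ring
  rwa [hexp] at hroot
end
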